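/- arXiv:2605.20953 — 6 statements merged into one kernel-verified Lean document; each statement's English description precedes it below -/
import Mathlib

section
/- Let α be an irrational real number, λ = exp(2πiα), and let (m_k), (F_k) be given by the Master recursion. Suppose the power series m(x) = Σ_{k≥1} m_k x^k has radius of convergence R > 0. Then for every complex x with |x| < R one has F(x) := Σ_{k≥0} F_k x^k = exp(m(x)) and m satisfies the functional equation m(λx) − 2m(x) + m(x/λ) = −x·exp(m(x)). -/
/-- `D α k = 2(1 - cos(2πkα))`, the small denominator of the Master recursion. -/
noncomputable def D (α : ℝ) (k : ℕ) : ℝ := 2 * (1 - Real.cos (2 * Real.pi * k * α))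

/-!
The recursion for `k * F k` says coefficientwise that `F' = m' F`. The Taylor coefficients of
`exp ∘ m`, which is holomorphic on the disc of convergence of `m`, satisfy the same recursion with
the same initial value, so they are the `F k`, and the Taylor series converges on the whole disc.
The functional equation is then a comparison of coefficients: the operator
`m(x) ↦ m(λx) - 2m(x) + m(x/λ)` multiplies the coefficient of `x ^ k` by `λ ^ k - 2 + λ ^ (-k)`,
which is `-D α k` when `λ = exp(2πiα)`.
-/

open scoped Nat

section PowerSeries

variable {𝕜 : Type*} [RCLike 𝕜] {a : ℕ → 𝕜} {R : ℝ}

theorem hasFPowerSeriesOnBall_tsum_mul_pow (hR : 0 < R)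
    (ha : ∀ z : 𝕜, ‖z‖ < R → Summable fun k : ℕ ↦ a k * z ^ k) :
    HasFPowerSeriesOnBall (fun z ↦ ∑' k : ℕ, a k * z ^ k)
      (FormalMultilinearSeries.ofScalars 𝕜 a) 0 (ENNReal.ofReal R) where
  r_le := by
    refine ENNReal.le_of_forall_nnreal_lt fun r hr ↦ ?_
    have hsum := (ha (r : ℝ) (by simpa using ENNReal.coe_lt_ofReal.1 hr)).norm
    refine FormalMultilinearSeries.le_radius_of_summable _ ?_
    simpa [FormalMultilinearSeries.ofScalars_norm] using hsum
  r_pos := ENNReal.ofReal_pos.2 hR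
  hasSum {z} hz := by
    rw [Metric.eball_ofReal, mem_ball_zero_iff] at hz
    simpa [FormalMultilinearSeries.ofScalars_apply_eq, mul_comm] using (ha z hz).hasSum

theorem iteratedDeriv_tsum_mul_pow_div_factorial (hR : 0 < R)
    (ha : ∀ z : 𝕜, ‖z‖ < R → Summable fun k : ℕ ↦ a k * z ^ k) (n : ℕ) :
    iteratedDeriv n (fun z : 𝕜 ↦ ∑' k : ℕ, a k * z ^ k) 0 / n ! = a n := by
  have hseries := (hasFPowerSeriesOnBall_tsum_mul_pow hR ha).hasFPowerSeriesAt
  exact congrFun (FormalMultilinearSeries.ofScalars_series_injective 𝕜 𝕜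
    (hseries.analyticAt.hasFPowerSeriesAt.eq_formalMultilinearSeries hseries)) n

end PowerSeries

/-- The coefficientwise form of the differential equation `f' = g' f` for the power series
`g = ∑ a k * x ^ k` and `f = ∑ b k * x ^ k`, whose solutions are the multiples of `exp g`. -/
def ExpRecursion {K : Type*} [Semiring K] (a b : ℕ → K) : Prop :=
  ∀ k : ℕ, 1 ≤ k → (k : K) * b k = ∑ j ∈ Finset.Icc 1 k, (j : K) * a j * b (k - j)

theorem ExpRecursion.unique {K : Type*} [Field K] [CharZero K] {a b c : ℕ → K}
    (hb : ExpRecursion a b) (hc : ExpRecursion a c) (h0 : b 0 = c 0) : b = c := by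
  funext k
  induction k using Nat.strong_induction_on with
  | _ k ih =>
    rcases Nat.eq_zero_or_pos k with rfl | hk
    · exact h0
    · refine mul_left_cancel₀ (Nat.cast_ne_zero.2 hk.ne') ?_
      rw [hb k hk, hc k hk]
      refine Finset.sum_congr rfl fun j hj ↦ ?_
      rw [ih (k - j) (Nat.sub_lt hk (Finset.mem_Icc.1 hj).1)]

theorem iteratedDeriv_succ_cexp_comp {g : ℂ → ℂ} {z : ℂ} (hg : AnalyticAt ℂ g z) (n : ℕ) :
    iteratedDeriv (n + 1) (fun w ↦ Complex.exp (g w)) z =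
      ∑ i ∈ Finset.range (n + 1), n.choose i * iteratedDeriv (i + 1) g z *
        iteratedDeriv (n - i) (fun w ↦ Complex.exp (g w)) z := by
  have hderiv : deriv (fun w ↦ Complex.exp (g w)) =ᶠ[nhds z]
      deriv g * fun w ↦ Complex.exp (g w) := by
    filter_upwards [hg.eventually_analyticAt] with w hw
    rw [deriv_cexp hw.differentiableAt, Pi.mul_apply, mul_comm]
  rw [iteratedDeriv_succ', hderiv.iteratedDeriv_eq,
    iteratedDeriv_mul hg.deriv.contDiffAt hg.contDiffAt.cexp]
  simp only [← iteratedDeriv_succ']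

theorem expRecursion_iteratedDeriv_cexp_comp {g : ℂ → ℂ} {z : ℂ} (hg : AnalyticAt ℂ g z) :
    ExpRecursion (fun k ↦ iteratedDeriv k g z / k !)
      fun k ↦ iteratedDeriv k (fun w ↦ Complex.exp (g w)) z / k ! := by
  intro k hk
  obtain ⟨n, rfl⟩ := Nat.exists_eq_add_of_le' hk
  have hfact (i : ℕ) (u : ℂ) : ((i + 1 : ℕ) : ℂ) * (u / (i + 1)!) = u / i ! := by
    rw [Nat.factorial_succ, Nat.cast_mul, mul_div_assoc', mul_div_mul_left]
    exact Nat.cast_ne_zero.2 i.succ_ne_zero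
  rw [hfact, iteratedDeriv_succ_cexp_comp hg, Finset.sum_div, ← Finset.Ico_add_one_right_eq_Icc,
    Finset.sum_Ico_eq_sum_range, Nat.add_sub_cancel]
  refine Finset.sum_congr rfl fun i hi ↦ ?_
  have hin : i ≤ n := Finset.mem_range_succ_iff.1 hi
  have hn : (n ! : ℂ) ≠ 0 := Nat.cast_ne_zero.2 n.factorial_ne_zero
  rw [Nat.add_comm 1 i, hfact, Nat.add_sub_add_right, Nat.cast_choose ℂ hin]
  field_simp

theorem hasSum_cexp_tsum_mul_pow {a b : ℕ → ℂ} {R : ℝ}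
    (ha : ∀ z : ℂ, ‖z‖ < R → Summable fun k : ℕ ↦ a k * z ^ k)
    (hab : ExpRecursion a b) (h0 : b 0 = Complex.exp (a 0)) {x : ℂ} (hx : ‖x‖ < R) :
    HasSum (fun k : ℕ ↦ b k * x ^ k) (Complex.exp (∑' k : ℕ, a k * x ^ k)) := by
  have hR : 0 < R := (norm_nonneg x).trans_lt hx
  set g : ℂ → ℂ := fun z ↦ ∑' k : ℕ, a k * z ^ k
  have hseries := hasFPowerSeriesOnBall_tsum_mul_pow hR ha
  have hcoeff : b = fun k ↦ iteratedDeriv k (fun w ↦ Complex.exp (g w)) 0 / k ! := by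
    have hrec := expRecursion_iteratedDeriv_cexp_comp hseries.analyticAt
    simp only [iteratedDeriv_tsum_mul_pow_div_factorial hR ha] at hrec
    refine hab.unique hrec ?_
    have hg0 : g 0 = a 0 := by simpa using iteratedDeriv_tsum_mul_pow_div_factorial hR ha 0
    simp [h0, hg0]
  have hdiff : DifferentiableOn ℂ (fun w ↦ Complex.exp (g w)) (Metric.ball 0 R) := by
    rw [← Metric.eball_ofReal]
    exact hseries.differentiableOn.cexp
  refine (Complex.hasSum_taylorSeries_on_ball hdiff (mem_ball_zero_iff.2 hx)).congr_fun fun k ↦ ?_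
  rw [hcoeff, sub_zero, smul_eq_mul, smul_eq_mul]
  ring

theorem tsum_mul_pow_sub_two_mul_add_div {K : Type*} [Field K] [TopologicalSpace K]
    [IsTopologicalRing K] [T2Space K] {a : ℕ → K} {l x : K}
    (hlx : Summable fun k : ℕ ↦ a k * (l * x) ^ k) (hx : Summable fun k : ℕ ↦ a k * x ^ k)
    (hxl : Summable fun k : ℕ ↦ a k * (x / l) ^ k) :
    ∑' k : ℕ, a k * (l * x) ^ k - 2 * ∑' k : ℕ, a k * x ^ k + ∑' k : ℕ, a k * (x / l) ^ k =
      -x * ∑' k : ℕ, (2 - l ^ (k + 1) - (l ^ (k + 1))⁻¹) * a (k + 1) * x ^ k := by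
  have hsum := (hlx.hasSum.sub (hx.hasSum.mul_left 2)).add hxl.hasSum
  rw [← hsum.tsum_eq, hsum.summable.tsum_eq_zero_add, ← tsum_mul_left]
  have hconst : a 0 * (l * x) ^ 0 - 2 * (a 0 * x ^ 0) + a 0 * (x / l) ^ 0 = 0 := by ring
  rw [hconst, zero_add]
  refine tsum_congr fun k ↦ ?_
  rw [mul_pow, div_pow]
  ring

theorem D_ne_zero {α : ℝ} (hα : Irrational α) {k : ℕ} (hk : k ≠ 0) : D α k ≠ 0 := by
  intro h
  have hcos : Real.cos (2 * Real.pi * k * α) = 1 := by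
    unfold D at h
    linarith
  obtain ⟨n, hn⟩ := (Real.cos_eq_one_iff _).1 hcos
  have hkn : (n : ℝ) = k * α := mul_right_cancel₀ Real.two_pi_pos.ne' (by rw [hn]; ring)
  exact (hα.natCast_mul hk).ne_int n hkn.symm

theorem two_sub_cexp_pow_sub_inv (α : ℝ) (k : ℕ) :
    2 - Complex.exp (2 * Real.pi * Complex.I * α) ^ k
      - (Complex.exp (2 * Real.pi * Complex.I * α) ^ k)⁻¹ = D α k := by
  have harg : (k : ℂ) * (2 * Real.pi * Complex.I * α) = 2 * Real.pi * k * α * Complex.I := by ring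
  rw [← Complex.exp_nat_mul, ← Complex.exp_neg, harg, D]
  push_cast
  rw [Complex.cos, neg_mul]
  ring

theorem stmt1_general {l : ℂ} (hl : l ≠ 0) {m F : ℕ → ℂ} (h0 : F 0 = Complex.exp (m 0))
    (hm : ∀ k : ℕ, (2 - l ^ (k + 1) - (l ^ (k + 1))⁻¹) * m (k + 1) = F k)
    (hF : ∀ k : ℕ, 1 ≤ k → (k : ℂ) * F k = ∑ j ∈ Finset.Icc 1 k, (j : ℂ) * m j * F (k - j))
    {R : ℝ} (hconv : ∀ x : ℂ, ‖x‖ < R → Summable fun k : ℕ ↦ m k * x ^ k)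
    {x : ℂ} (hlx : ‖l * x‖ < R) (hxl : ‖x / l‖ < R) :
    (Summable fun k : ℕ ↦ F k * x ^ k) ∧
    ∑' k : ℕ, F k * x ^ k = Complex.exp (∑' k : ℕ, m k * x ^ k) ∧
    ∑' k : ℕ, m k * (l * x) ^ k - 2 * ∑' k : ℕ, m k * x ^ k + ∑' k : ℕ, m k * (x / l) ^ k =
      -x * Complex.exp (∑' k : ℕ, m k * x ^ k) := by
  have hx : ‖x‖ < R := by
    refine lt_of_mul_self_lt_mul_self₀ ((norm_nonneg _).trans_lt hlx).le ?_
    calc ‖x‖ * ‖x‖ = ‖l * x‖ * ‖x / l‖ := by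
          rw [← norm_mul, ← norm_mul, mul_comm l, mul_assoc, mul_div_cancel₀ x hl]
      _ < R * R := mul_lt_mul'' hlx hxl (norm_nonneg _) (norm_nonneg _)
  have hexp := hasSum_cexp_tsum_mul_pow hconv hF h0 hx
  refine ⟨hexp.summable, hexp.tsum_eq, ?_⟩
  rw [tsum_mul_pow_sub_two_mul_add_div (hconv _ hlx) (hconv _ hx) (hconv _ hxl), ← hexp.tsum_eq]
  simp only [hm]

/-- if the power series `m(x) = Σ m_k x^k` (with `m_0 = 0`) has radius of
convergence `R > 0`, then for `|x| < R` the series `F(x) = Σ F_k x^k` converges, equals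
`exp(m(x))`, and `m` satisfies `m(λx) - 2m(x) + m(x/λ) = -x·exp(m(x))` where
`λ = exp(2πiα)`. -/
theorem stmt1 (α : ℝ) (hα : Irrational α)
    (l : ℂ) (hl : l = Complex.exp (2 * Real.pi * Complex.I * (α : ℂ)))
    (m F : ℕ → ℝ)
    (hm0 : m 0 = 0) (hF0 : F 0 = 1)
    (hm : ∀ k : ℕ, m (k + 1) = F k / D α (k + 1))
    (hF : ∀ k : ℕ, 1 ≤ k →
      (k : ℝ) * F k = ∑ j ∈ Finset.Icc 1 k, (j : ℝ) * m j * F (k - j))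
    (R : ℝ) (hR : 0 < R)
    (hconv : ∀ x : ℂ, ‖x‖ < R → Summable fun k : ℕ => (m k : ℂ) * x ^ k)
    (x : ℂ) (hx : ‖x‖ < R) :
    (Summable fun k : ℕ => (F k : ℂ) * x ^ k) ∧
    (∑' k : ℕ, (F k : ℂ) * x ^ k) = Complex.exp (∑' k : ℕ, (m k : ℂ) * x ^ k) ∧
    (∑' k : ℕ, (m k : ℂ) * (l * x) ^ k) - 2 * (∑' k : ℕ, (m k : ℂ) * x ^ k)
        + (∑' k : ℕ, (m k : ℂ) * (x / l) ^ k)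
      = -x * Complex.exp (∑' k : ℕ, (m k : ℂ) * x ^ k) := by
  have hnorm : ‖l‖ = 1 := by simp [hl, Complex.norm_exp]
  have hDm (k : ℕ) : (2 - l ^ (k + 1) - (l ^ (k + 1))⁻¹) * m (k + 1) = F k := by
    rw [hl, two_sub_cexp_pow_sub_inv, hm, ← Complex.ofReal_mul,
      mul_div_cancel₀ _ (D_ne_zero hα k.succ_ne_zero)]
  exact stmt1_general (by simp [hl]) (by simp [hm0, hF0]) hDm (fun k hk ↦ mod_cast hF k hk) hconv
    (by simpa [hnorm] using hx) (by simpa [hnorm] using hx)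
end

section
/- Let α be an irrational real number and let (m_k) be given by the Master recursion, with m(x) = Σ_{k≥1} m_k x^k of radius of convergence R > 0. Then for every real r with 0 < r < R one has the a priori bound r·exp(m(r)) ≤ 4·m(r). -/
/-!
Absolutely summable sequences `a`, `f` linked by the power series equation `f' = a' f` satisfy
`∑ f = exp (∑ a)`: the function `exp (-∑ tᵏ aₖ) · ∑ tᵏ fₖ` has derivative zero on `[0, 1)` and is
continuous up to `t = 1`. For the Master recursion this says `F(r) = exp (m(r))`, and since
`F_k = D(k+1) m_{k+1}` with `0 < D(k+1) ≤ 4`, comparing coefficients gives `r F(r) ≤ 4 m(r)`.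
-/

open Finset.HasAntidiagonal

section PowerSeries

variable {𝕜 E : Type*} [RCLike 𝕜] [NormedAddCommGroup E] [NormedSpace 𝕜 E]

theorem natCast_mul_pow_pred_le_inv_one_sub {t : ℝ} (ht0 : 0 ≤ t) (ht1 : t < 1) (k : ℕ) :
    k * t ^ (k - 1) ≤ (1 - t)⁻¹ :=
  calc (k : ℝ) * t ^ (k - 1) = ∑ _i ∈ Finset.range k, t ^ (k - 1) := by simp
    _ ≤ ∑ i ∈ Finset.range k, t ^ i := Finset.sum_le_sum fun _ hi =>
        pow_le_pow_of_le_one ht0 ht1.le (Nat.le_sub_one_of_lt (Finset.mem_range.1 hi))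
    _ ≤ ∑' i : ℕ, t ^ i := (summable_geometric_of_lt_one ht0 ht1).sum_le_tsum _ fun _ _ => by
        positivity
    _ = (1 - t)⁻¹ := tsum_geometric_of_lt_one ht0 ht1

theorem norm_natCast_mul_pow_pred_smul_le {t : ℝ} (ht : t < 1) {x : 𝕜} (hx : ‖x‖ ≤ t) (k : ℕ)
    (v : E) : ‖((k : 𝕜) * x ^ (k - 1)) • v‖ ≤ (1 - t)⁻¹ * ‖v‖ := by
  have ht0 : 0 ≤ t := (norm_nonneg x).trans hx
  have hpow : ‖(k : 𝕜) * x ^ (k - 1)‖ ≤ (1 - t)⁻¹ :=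
    calc ‖(k : 𝕜) * x ^ (k - 1)‖ = k * ‖x‖ ^ (k - 1) := by
          rw [norm_mul, norm_pow, RCLike.norm_natCast]
      _ ≤ k * t ^ (k - 1) := by gcongr
      _ ≤ (1 - t)⁻¹ := natCast_mul_pow_pred_le_inv_one_sub ht0 ht k
  rw [norm_smul]
  gcongr

theorem norm_pow_smul_le {x : 𝕜} (hx : ‖x‖ ≤ 1) (k : ℕ) (v : E) : ‖x ^ k • v‖ ≤ ‖v‖ := by
  rw [norm_smul, norm_pow]
  exact mul_le_of_le_one_left (norm_nonneg v) (pow_le_one₀ (norm_nonneg x) hx)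

theorem summable_norm_pow_smul {c : ℕ → E} (hc : Summable fun k => ‖c k‖) {x : 𝕜}
    (hx : ‖x‖ ≤ 1) : Summable fun k => ‖x ^ k • c k‖ :=
  hc.of_nonneg_of_le (fun _ => norm_nonneg _) fun k => norm_pow_smul_le hx k (c k)

theorem summable_norm_pow_smul_succ_smul {c : ℕ → E} (hc : Summable fun k => ‖c k‖) {x : 𝕜}
    (hx : ‖x‖ < 1) : Summable fun k : ℕ => ‖x ^ k • (k + 1) • c (k + 1)‖ := by
  refine (((summable_nat_add_iff 1).2 hc).mul_left (1 - ‖x‖)⁻¹).of_nonneg_of_le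
    (fun _ => norm_nonneg _) fun k => ?_
  have hbound := norm_natCast_mul_pow_pred_smul_le hx le_rfl (k + 1) (c (k + 1))
  rwa [mul_comm, mul_smul, Nat.cast_smul_eq_nsmul, Nat.add_sub_cancel] at hbound

theorem continuousOn_tsum_pow_smul [CompleteSpace E] {c : ℕ → E} (hc : Summable fun k => ‖c k‖) :
    ContinuousOn (fun x : 𝕜 => ∑' k, x ^ k • c k) (Metric.closedBall 0 1) :=
  continuousOn_tsum (fun _ => by fun_prop) hc fun k _ hx =>
    norm_pow_smul_le (mem_closedBall_zero_iff.1 hx) k (c k)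

theorem hasDerivAt_tsum_pow_smul [CompleteSpace E] {c : ℕ → E} (hc : Summable fun k => ‖c k‖)
    {x : 𝕜} (hx : ‖x‖ < 1) :
    HasDerivAt (fun y : 𝕜 => ∑' k, y ^ k • c k) (∑' k : ℕ, x ^ k • (k + 1) • c (k + 1)) x := by
  obtain ⟨t, hxt, ht⟩ := exists_between hx
  have hderiv : HasDerivAt (fun y : 𝕜 => ∑' k, y ^ k • c k)
      (∑' k : ℕ, ((k : 𝕜) * x ^ (k - 1)) • c k) x :=
    hasDerivAt_tsum_of_isPreconnected (hc.mul_left (1 - t)⁻¹) Metric.isOpen_ball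
      (convex_ball (0 : 𝕜) t).isPreconnected (fun k y _ => (hasDerivAt_pow k y).smul_const (c k))
      (fun k y hy => norm_natCast_mul_pow_pred_smul_le ht (mem_ball_zero_iff.1 hy).le k (c k))
      (mem_ball_zero_iff.2 hxt) (summable_norm_pow_smul hc hx.le).of_norm
      (mem_ball_zero_iff.2 hxt)
  have hsummable : Summable fun k : ℕ => ((k : 𝕜) * x ^ (k - 1)) • c k :=
    .of_norm_bounded (hc.mul_left (1 - ‖x‖)⁻¹) fun k =>
      norm_natCast_mul_pow_pred_smul_le hx le_rfl k (c k)
  convert hderiv using 1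
  rw [hsummable.tsum_eq_zero_add, Nat.cast_zero, zero_mul, zero_smul, zero_add]
  refine tsum_congr fun k => ?_
  rw [mul_comm, mul_smul, Nat.cast_smul_eq_nsmul, Nat.add_sub_cancel]

theorem tsum_pow_smul_mul_tsum_pow_smul {A : Type*} [NormedRing A] [NormedAlgebra 𝕜 A]
    [CompleteSpace A] {a b : ℕ → A} {x : 𝕜} (ha : Summable fun k => ‖x ^ k • a k‖)
    (hb : Summable fun k => ‖x ^ k • b k‖) :
    (∑' k, x ^ k • a k) * ∑' k, x ^ k • b k =
      ∑' k, x ^ k • ∑ p ∈ antidiagonal k, a p.1 * b p.2 := by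
  rw [tsum_mul_tsum_eq_tsum_sum_antidiagonal_of_summable_norm ha hb]
  refine tsum_congr fun k => ?_
  rw [Finset.smul_sum]
  refine Finset.sum_congr rfl fun p hp => ?_
  rw [smul_mul_smul_comm, ← pow_add, mem_antidiagonal.1 hp]

theorem tsum_pow_smul_succ_smul_eq_mul {A : Type*} [NormedRing A] [NormedAlgebra 𝕜 A]
    [CompleteSpace A] {a f : ℕ → A} (ha : Summable fun k => ‖a k‖) (hfs : Summable fun k => ‖f k‖)
    (hf : ∀ k, (k + 1) • f (k + 1) = ∑ p ∈ antidiagonal k, ((p.1 + 1) • a (p.1 + 1)) * f p.2)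
    {x : 𝕜} (hx : ‖x‖ < 1) :
    ∑' k : ℕ, x ^ k • (k + 1) • f (k + 1) =
      (∑' k : ℕ, x ^ k • (k + 1) • a (k + 1)) * ∑' k, x ^ k • f k := by
  have ha' := summable_norm_pow_smul_succ_smul ha hx
  have hfs' := summable_norm_pow_smul hfs hx.le
  simp only [hf]
  exact (tsum_pow_smul_mul_tsum_pow_smul ha' hfs').symm

end PowerSeries

section Exponential

variable {A : Type*} [NormedCommRing A] [NormedAlgebra ℝ A] [CompleteSpace A]

theorem hasDerivAt_exp_neg_tsum_mul_tsum {a f : ℕ → A} (ha : Summable fun k => ‖a k‖)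
    (hfs : Summable fun k => ‖f k‖)
    (hf : ∀ k, (k + 1) • f (k + 1) = ∑ p ∈ antidiagonal k, ((p.1 + 1) • a (p.1 + 1)) * f p.2)
    {t : ℝ} (ht : ‖t‖ < 1) :
    HasDerivAt (fun s : ℝ => NormedSpace.exp (-∑' k, s ^ k • a k) * ∑' k, s ^ k • f k) 0 t := by
  have hchain := hasFDerivAt_exp.comp_hasDerivAt t (hasDerivAt_tsum_pow_smul ha ht).fun_neg
  have hexp : HasDerivAt (fun s : ℝ => NormedSpace.exp (-∑' k, s ^ k • a k))
      (NormedSpace.exp (-∑' k, t ^ k • a k) * -∑' k : ℕ, t ^ k • (k + 1) • a (k + 1)) t := hchain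
  refine (hexp.mul (hasDerivAt_tsum_pow_smul hfs ht)).congr_deriv ?_
  rw [tsum_pow_smul_succ_smul_eq_mul ha hfs hf ht]
  ring

theorem exp_tsum_eq_tsum_of_succ_nsmul_eq {a f : ℕ → A} (ha : Summable fun k => ‖a k‖)
    (hfs : Summable fun k => ‖f k‖) (hf0 : f 0 = NormedSpace.exp (a 0))
    (hf : ∀ k, (k + 1) • f (k + 1) = ∑ p ∈ antidiagonal k, ((p.1 + 1) • a (p.1 + 1)) * f p.2) :
    NormedSpace.exp (∑' k, a k) = ∑' k, f k := by
  let : NormedAlgebra ℚ A := NormedAlgebra.restrictScalars ℚ ℝ A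
  have hcont {c : ℕ → A} (hc : Summable fun k => ‖c k‖) :
      ContinuousOn (fun t : ℝ => ∑' k, t ^ k • c k) (Set.Icc 0 1) :=
    (continuousOn_tsum_pow_smul hc).mono fun t ht =>
      mem_closedBall_zero_iff.2 (abs_le.2 ⟨by linarith [ht.1], ht.2⟩)
  have hconst : NormedSpace.exp (-∑' k, (1 : ℝ) ^ k • a k) * ∑' k, (1 : ℝ) ^ k • f k =
      NormedSpace.exp (-∑' k, (0 : ℝ) ^ k • a k) * ∑' k, (0 : ℝ) ^ k • f k :=
    constant_of_has_deriv_right_zero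
      ((NormedSpace.exp_continuous.comp_continuousOn (hcont ha).neg).mul (hcont hfs))
      (fun t ht => (hasDerivAt_exp_neg_tsum_mul_tsum ha hfs hf
        (abs_lt.2 ⟨by linarith [ht.1], ht.2⟩)).hasDerivWithinAt)
      1 (Set.right_mem_Icc.2 zero_le_one)
  have hzero (c : ℕ → A) : ∑' k, (0 : ℝ) ^ k • c k = c 0 := by
    rw [tsum_eq_single 0 fun k hk => by rw [zero_pow hk, zero_smul], pow_zero, one_smul]
  have hexp (x : A) : NormedSpace.exp x * NormedSpace.exp (-x) = 1 := by
    rw [← NormedSpace.exp_add, add_neg_cancel, NormedSpace.exp_zero]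
  have hinv : NormedSpace.exp (-∑' k, a k) * ∑' k, f k = 1 := by
    simpa only [one_pow, one_smul, hzero, hf0, mul_comm, hexp] using hconst
  rw [← mul_one (NormedSpace.exp _), ← hinv, ← mul_assoc, hexp, one_mul]

end Exponential

/-- The pair `(m, F)` solves the Master recursion with an arbitrary sequence of denominators
`d 1, d 2, …` in place of the small denominators `D α`; `d 0` is a placeholder. -/
structure IsMasterSolution (d m F : ℕ → ℝ) : Prop where
  m_zero : m 0 = 0
  F_zero : F 0 = 1
  m_succ : ∀ k : ℕ, m (k + 1) = F k / d (k + 1)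
  mul_F : ∀ k : ℕ, 1 ≤ k → (k : ℝ) * F k = ∑ j ∈ Finset.Icc 1 k, (j : ℝ) * m j * F (k - j)

namespace IsMasterSolution

variable {d m F : ℕ → ℝ}

theorem succ_mul_F_succ (h : IsMasterSolution d m F) (k : ℕ) :
    (k + 1) * F (k + 1) = ∑ p ∈ antidiagonal k, (p.1 + 1) * m (p.1 + 1) * F p.2 := by
  have hmul := h.mul_F (k + 1) k.succ_pos
  rw [Nat.cast_succ] at hmul
  rw [hmul, Finset.Nat.sum_antidiagonal_eq_sum_range_succ_mk, Finset.range_eq_Ico,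
    ← Finset.Ico_add_one_right_eq_Icc, ← Finset.sum_Ico_add' _ 0 (k + 1) 1]
  simp only [Nat.cast_succ, Nat.add_sub_add_right]

theorem F_nonneg (h : IsMasterSolution d m F) (hd : ∀ k, 0 < d (k + 1)) (k : ℕ) : 0 ≤ F k := by
  induction k using Nat.strong_induction_on with
  | _ k ih =>
    cases k with
    | zero => exact h.F_zero ▸ zero_le_one
    | succ k =>
      refine nonneg_of_mul_nonneg_right ?_ (Nat.cast_add_one_pos (α := ℝ) k)
      rw [h.succ_mul_F_succ]
      refine Finset.sum_nonneg fun p hp => ?_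
      have hp₁ := ih p.1 (Nat.lt_succ_of_le (antidiagonal.fst_le hp))
      have hp₂ := ih p.2 (Nat.lt_succ_of_le (antidiagonal.snd_le hp))
      have hdp := hd p.1
      rw [h.m_succ]
      positivity

theorem m_nonneg (h : IsMasterSolution d m F) (hd : ∀ k, 0 < d (k + 1)) : ∀ k, 0 ≤ m k
  | 0 => h.m_zero.ge
  | k + 1 => h.m_succ k ▸ div_nonneg (h.F_nonneg hd k) (hd k).le

theorem mul_F_mul_pow_le (h : IsMasterSolution d m F) {C r : ℝ} (hd : ∀ k, 0 < d (k + 1))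
    (hdC : ∀ k, d (k + 1) ≤ C) (hr : 0 ≤ r) (k : ℕ) :
    r * (F k * r ^ k) ≤ C * (m (k + 1) * r ^ (k + 1)) := by
  have hm := h.m_nonneg hd (k + 1)
  calc r * (F k * r ^ k) = d (k + 1) * (m (k + 1) * r ^ (k + 1)) := by
        rw [h.m_succ, ← mul_assoc (d (k + 1)), mul_div_cancel₀ _ (hd k).ne']
        ring
    _ ≤ C * (m (k + 1) * r ^ (k + 1)) := mul_le_mul_of_nonneg_right (hdC k) (by positivity)

theorem summable_F_mul_pow (h : IsMasterSolution d m F) {C r : ℝ} (hd : ∀ k, 0 < d (k + 1))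
    (hdC : ∀ k, d (k + 1) ≤ C) (hr : 0 < r) (hs : Summable fun k => m k * r ^ k) :
    Summable fun k => F k * r ^ k :=
  (summable_mul_left_iff hr.ne').1 <| .of_nonneg_of_le
    (fun k => mul_nonneg hr.le (mul_nonneg (h.F_nonneg hd k) (pow_nonneg hr.le k)))
    (h.mul_F_mul_pow_le hd hdC hr.le) (((summable_nat_add_iff 1).2 hs).mul_left C)

theorem exp_tsum_m_eq_tsum_F (h : IsMasterSolution d m F) {r : ℝ}
    (hm : Summable fun k => m k * r ^ k) (hF : Summable fun k => F k * r ^ k) :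
    Real.exp (∑' k, m k * r ^ k) = ∑' k, F k * r ^ k := by
  rw [Real.exp_eq_exp_ℝ]
  refine exp_tsum_eq_tsum_of_succ_nsmul_eq hm.norm hF.norm ?_ fun k => ?_
  · rw [h.m_zero, h.F_zero, zero_mul, NormedSpace.exp_zero, pow_zero, mul_one]
  · calc (k + 1) • (F (k + 1) * r ^ (k + 1)) = (k + 1) * F (k + 1) * r ^ (k + 1) := by
          rw [nsmul_eq_mul, Nat.cast_succ, mul_assoc]
      _ = ∑ p ∈ antidiagonal k,
            ((p.1 + 1) • (m (p.1 + 1) * r ^ (p.1 + 1))) * (F p.2 * r ^ p.2) := by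
          rw [h.succ_mul_F_succ, Finset.sum_mul]
          refine Finset.sum_congr rfl fun p hp => ?_
          rw [← mem_antidiagonal.1 hp, nsmul_eq_mul, Nat.cast_succ]
          ring

end IsMasterSolution

theorem D_pos {α : ℝ} (hα : Irrational α) {k : ℕ} (hk : k ≠ 0) : 0 < D α k := by
  have hne : Real.cos (2 * Real.pi * k * α) ≠ 1 := fun hcos => by
    obtain ⟨n, hn⟩ := (Real.cos_eq_one_iff _).1 hcos
    refine (hα.natCast_mul hk).ne_int n (mul_left_cancel₀ Real.two_pi_pos.ne' ?_)
    linarith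
  have hlt := (Real.cos_le_one _).lt_of_ne hne
  unfold D
  linarith

theorem D_le_four (α : ℝ) (k : ℕ) : D α k ≤ 4 := by
  have hcos := Real.neg_one_le_cos (2 * Real.pi * k * α)
  unfold D
  linarith

theorem stmt2_general {d m F : ℕ → ℝ} (h : IsMasterSolution d m F) {C r : ℝ}
    (hd : ∀ k, 0 < d (k + 1)) (hdC : ∀ k, d (k + 1) ≤ C) (hr : 0 < r)
    (hs : Summable fun k => m k * r ^ k) :
    r * Real.exp (∑' k, m k * r ^ k) ≤ C * ∑' k, m k * r ^ k := by
  have hsF := h.summable_F_mul_pow hd hdC hr hs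
  calc r * Real.exp (∑' k, m k * r ^ k)
      = ∑' k, r * (F k * r ^ k) := by rw [h.exp_tsum_m_eq_tsum_F hs hsF, tsum_mul_left]
    _ ≤ ∑' k, C * (m (k + 1) * r ^ (k + 1)) :=
        (hsF.mul_left r).tsum_le_tsum (h.mul_F_mul_pow_le hd hdC hr.le)
          (((summable_nat_add_iff 1).2 hs).mul_left C)
    _ = C * ∑' k, m k * r ^ k := by
        rw [tsum_mul_left, hs.tsum_eq_zero_add, h.m_zero, zero_mul, zero_add]

/-- if the power series `m(x) = Σ m_k x^k` of the Master recursion has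
radius of convergence `R > 0`, then for every `0 < r < R` one has the a priori bound
`r·exp(m(r)) ≤ 4·m(r)` (here `m(r) = Σ m_k r^k = max_{|x|=r} |m(x)|` since `m_k ≥ 0`). -/
theorem stmt2 (α : ℝ) (hα : Irrational α) (m F : ℕ → ℝ)
    (hm0 : m 0 = 0) (hF0 : F 0 = 1)
    (hm : ∀ k : ℕ, m (k + 1) = F k / D α (k + 1))
    (hF : ∀ k : ℕ, 1 ≤ k →
      (k : ℝ) * F k = ∑ j ∈ Finset.Icc 1 k, (j : ℝ) * m j * F (k - j))
    (R : ℝ) (hR : 0 < R)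
    (hconv : ∀ r : ℝ, 0 ≤ r → r < R → Summable fun k : ℕ => m k * r ^ k)
    (r : ℝ) (hr0 : 0 < r) (hrR : r < R) :
    r * Real.exp (∑' k : ℕ, m k * r ^ k) ≤ 4 * ∑' k : ℕ, m k * r ^ k :=
  stmt2_general ⟨hm0, hF0, hm, hF⟩ (fun k => D_pos hα k.succ_ne_zero) (fun k => D_le_four α (k + 1))
    hr0 (hconv r hr0.le hrR)
end

section
/- Let α be a badly approximable irrational real number. Then the power series Σ_{k≥0} x^k / (D(1)·D(2)···D(k)) (the solution of the linearized Master equation with m(0) = 1) has radius of convergence exactly equal to 1. -/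
/-!
With `q = exp (2πiα)` one has `D α k = ‖1 - q ^ k‖ ^ 2`, so the coefficients of the series are the
squared norms of the coefficients `aₙ` of the `q`-exponential `E`, the solution of
`E(qx) = (1 - x) E(x)` with `E(0) = 1`.

Convergence: logarithmic differentiation of the functional equation gives
`E' = E · ∑ xⁿ / (1 - qⁿ⁺¹)`, so `(n + 1) aₙ₊₁` is a convolution of `a` with numbers of
subexponential size, which forces `a` itself to grow subexponentially.

Divergence: the coefficients `bₙ` of `1 / E` satisfy `‖bₙ‖ = ‖aₙ‖` and `b₀ + ⋯ + bₙ = qⁿ bₙ`. If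
`∑ ‖aₙ‖` converged, then `1 / E` would vanish at `x = 1`, contradicting `E · (1 / E) = 1`.
-/

open Finset Filter Topology
open scoped PowerSeries FourierTransform

section RealSequences

variable {a b : ℕ → ℝ}

theorem bddAbove_range_of_convolution_le (ha : ∀ n, 0 ≤ a n) (hb : ∀ n, 0 ≤ b n) (hs : Summable b)
    (hab : ∀ n : ℕ, (n + 1) * a (n + 1) ≤ ∑ ij ∈ antidiagonal n, a ij.1 * b ij.2) :
    BddAbove (Set.range a) := by
  obtain ⟨N, hN⟩ := exists_nat_ge (∑' j, b j)
  set M := ∑ i ∈ range (N + 1), a i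
  have hM : 0 ≤ M := sum_nonneg fun i _ => ha i
  refine ⟨M, Set.forall_mem_range.2 fun n => ?_⟩
  induction n using Nat.strong_induction_on with
  | _ n ih =>
    rcases lt_or_ge n (N + 1) with hn | hn
    · exact single_le_sum (fun i _ => ha i) (mem_range.2 hn)
    · obtain ⟨m, rfl⟩ : ∃ m, n = m + 1 := ⟨n - 1, by omega⟩
      have hNm : (N : ℝ) ≤ m + 1 := by exact_mod_cast (by omega : N ≤ m + 1)
      refine le_of_mul_le_mul_left ?_ (by positivity : (0 : ℝ) < m + 1)
      calc (m + 1) * a (m + 1)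
          ≤ ∑ ij ∈ antidiagonal m, a ij.1 * b ij.2 := hab m
        _ ≤ ∑ ij ∈ antidiagonal m, M * b ij.2 := sum_le_sum fun ij hij =>
            mul_le_mul_of_nonneg_right
              (ih _ (by have := mem_antidiagonal.1 hij; omega)) (hb _)
        _ = M * ∑ j ∈ range (m + 1), b j := by
            rw [← mul_sum, Nat.sum_antidiagonal_eq_sum_range_succ_mk,
              ← sum_range_reflect b (m + 1)]
            simp only [Nat.add_sub_cancel]
        _ ≤ M * (m + 1) := by
            gcongr
            exact (hs.sum_le_tsum _ fun j _ => hb j).trans (hN.trans hNm)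
        _ = (m + 1) * M := mul_comm _ _

theorem summable_of_summable_sq_mul_pow (ha : ∀ n, 0 ≤ a n) {r : ℝ} (hr : 1 < r)
    (h : Summable fun n => a n ^ 2 * r ^ n) : Summable a := by
  have hr0 : 0 < r := one_pos.trans hr
  have hgeom : Summable fun n : ℕ => r⁻¹ ^ n :=
    summable_geometric_of_lt_one (inv_nonneg.2 hr0.le) (inv_lt_one_of_one_lt₀ hr)
  refine .of_nonneg_of_le ha (fun n => ?_) (h.add hgeom)
  have hsplit : a n ^ 2 * r ^ n + r⁻¹ ^ n - 2 * a n = r⁻¹ ^ n * (a n * r ^ n - 1) ^ 2 := by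
    rw [inv_pow]
    field_simp
    ring
  have hamgm : 0 ≤ r⁻¹ ^ n * (a n * r ^ n - 1) ^ 2 := by positivity
  linarith [ha n]

end RealSequences

/-- The `q`-exponential `∑ xⁿ / ((1 - q) (1 - q²) ⋯ (1 - qⁿ))` as a formal power series, for `q` not
a root of unity. -/
noncomputable def qExp {K : Type*} [Field K] (q : K) : K⟦X⟧ :=
  PowerSeries.mk fun n => (∏ j ∈ Icc 1 n, (1 - q ^ j))⁻¹

namespace qExp

open PowerSeries

section Field

variable {K : Type*} [Field K] {q : K}

theorem one_sub_pow_succ_ne_zero (hq : ¬IsOfFinOrder q) (n : ℕ) : 1 - q ^ (n + 1) ≠ 0 := fun h =>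
  hq (isOfFinOrder_iff_pow_eq_one.2 ⟨n + 1, n.succ_pos, (sub_eq_zero.1 h).symm⟩)

theorem constantCoeff_eq_one (q : K) : constantCoeff (qExp q) = 1 := by
  simp [qExp, ← coeff_zero_eq_constantCoeff_apply]

theorem mul_inv_self (q : K) : qExp q * (qExp q)⁻¹ = 1 :=
  PowerSeries.mul_inv_cancel _ (by simp [constantCoeff_eq_one])

theorem one_sub_pow_mul_coeff_succ (hq : ¬IsOfFinOrder q) (n : ℕ) :
    (1 - q ^ (n + 1)) * coeff (n + 1) (qExp q) = coeff n (qExp q) := by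
  rw [qExp, coeff_mk, coeff_mk, prod_Icc_succ_top (by omega), mul_inv_rev,
    mul_inv_cancel_left₀ (one_sub_pow_succ_ne_zero hq n)]

theorem rescale_eq (hq : ¬IsOfFinOrder q) : rescale q (qExp q) = (1 - X) * qExp q := by
  ext n
  rw [coeff_rescale, sub_mul, one_mul, map_sub]
  cases n with
  | zero => simp
  | succ n =>
    rw [coeff_succ_X_mul]
    linear_combination -one_sub_pow_mul_coeff_succ hq n

theorem one_sub_X_mul_rescale_inv (hq : ¬IsOfFinOrder q) :
    (1 - X) * rescale q (qExp q)⁻¹ = (qExp q)⁻¹ := by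
  have hrescaled : (1 - X) * qExp q * rescale q (qExp q)⁻¹ = 1 := by
    rw [← rescale_eq hq, ← map_mul, mul_inv_self, map_one]
  linear_combination (qExp q)⁻¹ * hrescaled - (1 - X) * rescale q (qExp q)⁻¹ * mul_inv_self q

theorem sum_range_coeff_inv (hq : ¬IsOfFinOrder q) (n : ℕ) :
    ∑ j ∈ range (n + 1), coeff j (qExp q)⁻¹ = q ^ n * coeff n (qExp q)⁻¹ := by
  induction n with
  | zero => simp
  | succ n ih =>
    have h := congrArg (coeff (n + 1)) (one_sub_X_mul_rescale_inv hq)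
    rw [sub_mul, one_mul, map_sub, coeff_succ_X_mul, coeff_rescale, coeff_rescale] at h
    rw [sum_range_succ, ih]
    linear_combination -h

theorem one_sub_pow_mul_coeff_inv_succ (hq : ¬IsOfFinOrder q) (n : ℕ) :
    (1 - q ^ (n + 1)) * coeff (n + 1) (qExp q)⁻¹ = -(q ^ n * coeff n (qExp q)⁻¹) := by
  have h := sum_range_coeff_inv hq (n + 1)
  rw [sum_range_succ, sum_range_coeff_inv hq n] at h
  linear_combination h

theorem rescale_derivative (hq : ¬IsOfFinOrder q) :
    q • rescale q (d⁄dX K (qExp q)) = (1 - X) * d⁄dX K (qExp q) - qExp q := by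
  have hchain : q • rescale q (d⁄dX K (qExp q)) = d⁄dX K (rescale q (qExp q)) := by
    ext n
    simp only [map_smul, smul_eq_mul, coeff_rescale, coeff_derivative]
    ring
  rw [hchain, rescale_eq hq, Derivation.leibniz, map_sub, derivative_one, derivative_X]
  simp only [smul_eq_mul]
  ring

theorem inv_mul_derivative (hq : ¬IsOfFinOrder q) :
    (qExp q)⁻¹ * d⁄dX K (qExp q) = PowerSeries.mk fun n => (1 - q ^ (n + 1))⁻¹ := by
  set L := (qExp q)⁻¹ * d⁄dX K (qExp q) with hL
  have hshift : (1 - X) * (L - q • rescale q L) = 1 := by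
    rw [hL, map_mul, ← mul_smul_comm, rescale_derivative hq]
    linear_combination mul_inv_self q - ((1 - X) * d⁄dX K (qExp q) - qExp q) *
      one_sub_X_mul_rescale_inv hq
  have hgeom : L - q • rescale q L = PowerSeries.mk 1 := by
    linear_combination PowerSeries.mk 1 * hshift -
      (L - q • rescale q L) * mk_one_mul_one_sub_eq_one K
  ext n
  have hn := congrArg (coeff n) hgeom
  rw [map_sub, map_smul, coeff_rescale, smul_eq_mul, coeff_mk, Pi.one_apply] at hn
  rw [coeff_mk, ← mul_eq_one_iff_eq_inv₀ (one_sub_pow_succ_ne_zero hq n)]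
  linear_combination hn

theorem sum_antidiagonal_coeff_mul_inv (hq : ¬IsOfFinOrder q) (n : ℕ) :
    ∑ ij ∈ antidiagonal n, coeff ij.1 (qExp q) * (1 - q ^ (ij.2 + 1))⁻¹ =
      (n + 1) * coeff (n + 1) (qExp q) := by
  have h : qExp q * PowerSeries.mk (fun n => (1 - q ^ (n + 1))⁻¹) = d⁄dX K (qExp q) := by
    rw [← inv_mul_derivative hq, ← mul_assoc, mul_inv_self, one_mul]
  simpa only [coeff_mul, coeff_mk, coeff_derivative, mul_comm] using congrArg (coeff n) h

end Field

section NormedField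

variable {K : Type*} [NormedField K] {q : K}

theorem norm_coeff_inv (hq : ¬IsOfFinOrder q) (hq1 : ‖q‖ = 1) (n : ℕ) :
    ‖coeff n (qExp q)⁻¹‖ = ‖coeff n (qExp q)‖ := by
  induction n with
  | zero => simp [constantCoeff_eq_one]
  | succ n ih =>
    refine mul_left_cancel₀ (norm_ne_zero_iff.2 (one_sub_pow_succ_ne_zero hq n)) ?_
    rw [← norm_mul, ← norm_mul, one_sub_pow_mul_coeff_inv_succ hq, one_sub_pow_mul_coeff_succ hq,
      norm_neg, norm_mul, norm_pow, hq1, one_pow, one_mul, ih]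

theorem not_summable_norm_coeff [CompleteSpace K] (hq : ¬IsOfFinOrder q) (hq1 : ‖q‖ = 1) :
    ¬Summable fun n => ‖coeff n (qExp q)‖ := by
  intro hs
  have hs_inv : Summable fun n => ‖coeff n (qExp q)⁻¹‖ := by
    simpa only [norm_coeff_inv hq hq1] using hs
  have hproduct : (∑' n, coeff n (qExp q)) * ∑' n, coeff n (qExp q)⁻¹ = 1 := by
    rw [tsum_mul_tsum_eq_tsum_sum_antidiagonal_of_summable_norm hs hs_inv]
    simp_rw [← coeff_mul, mul_inv_self, coeff_one, tsum_ite_eq]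
  have hpartial : Tendsto (fun n => ∑ j ∈ range (n + 1), coeff j (qExp q)⁻¹) atTop (𝓝 0) := by
    refine squeeze_zero_norm (fun n => ?_) hs_inv.tendsto_atTop_zero
    rw [sum_range_coeff_inv hq, norm_mul, norm_pow, hq1, one_pow, one_mul]
  have hvanish : ∑' n, coeff n (qExp q)⁻¹ = 0 :=
    tendsto_nhds_unique
      ((tendsto_add_atTop_iff_nat 1).2 hs_inv.of_norm.hasSum.tendsto_sum_nat) hpartial
  rw [hvanish, mul_zero] at hproduct
  exact zero_ne_one hproduct

end NormedField

section RCLike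

variable {K : Type*} [RCLike K] {q : K}

theorem bddAbove_range_norm_coeff_mul_pow (hq : ¬IsOfFinOrder q) {r : ℝ} (hr : 0 ≤ r)
    (hs : Summable fun n => ‖(1 - q ^ (n + 1))⁻¹‖ * r ^ (n + 1)) :
    BddAbove (Set.range fun n => ‖coeff n (qExp q)‖ * r ^ n) := by
  refine bddAbove_range_of_convolution_le (fun n => by positivity) (fun n => by positivity) hs
    fun n => ?_
  have hnorm : (n + 1) * ‖coeff (n + 1) (qExp q)‖ ≤
      ∑ ij ∈ antidiagonal n, ‖coeff ij.1 (qExp q)‖ * ‖(1 - q ^ (ij.2 + 1))⁻¹‖ := by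
    calc (n + 1) * ‖coeff (n + 1) (qExp q)‖
        = ‖∑ ij ∈ antidiagonal n, coeff ij.1 (qExp q) * (1 - q ^ (ij.2 + 1))⁻¹‖ := by
          rw [sum_antidiagonal_coeff_mul_inv hq, norm_mul, ← Nat.cast_succ, ← Nat.cast_succ,
            RCLike.norm_natCast]
      _ ≤ _ := norm_sum_le_of_le _ fun ij _ => (norm_mul _ _).le
  calc (n + 1) * (‖coeff (n + 1) (qExp q)‖ * r ^ (n + 1))
      = (n + 1) * ‖coeff (n + 1) (qExp q)‖ * r ^ (n + 1) := by ring
    _ ≤ (∑ ij ∈ antidiagonal n, ‖coeff ij.1 (qExp q)‖ * ‖(1 - q ^ (ij.2 + 1))⁻¹‖) *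
          r ^ (n + 1) := by gcongr
    _ = ∑ ij ∈ antidiagonal n, ‖coeff ij.1 (qExp q)‖ * r ^ ij.1 *
          (‖(1 - q ^ (ij.2 + 1))⁻¹‖ * r ^ (ij.2 + 1)) := by
        rw [sum_mul]
        refine sum_congr rfl fun ij hij => ?_
        rw [← mem_antidiagonal.1 hij]
        ring

theorem summable_norm_coeff_sq_mul_pow (hq : ¬IsOfFinOrder q)
    (hs : ∀ r : ℝ, 0 ≤ r → r < 1 → Summable fun n => ‖(1 - q ^ (n + 1))⁻¹‖ * r ^ (n + 1))
    {x : ℝ} (hx0 : 0 ≤ x) (hx1 : x < 1) :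
    Summable fun n => ‖coeff n (qExp q)‖ ^ 2 * x ^ n := by
  obtain ⟨s, hxs, hs1⟩ := exists_between ((Real.sqrt_lt' one_pos).2 (by rwa [one_pow]) : √x < 1)
  have hs0 : 0 < s := (Real.sqrt_nonneg x).trans_lt hxs
  have hratio : x / s ^ 2 < 1 := (div_lt_one (pow_pos hs0 2)).2 ((Real.sqrt_lt' hs0).1 hxs)
  obtain ⟨M, hM⟩ := bddAbove_range_norm_coeff_mul_pow hq hs0.le (hs s hs0.le hs1)
  refine .of_nonneg_of_le (fun n => by positivity) (fun n => ?_)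
    ((summable_geometric_of_lt_one (by positivity) hratio).mul_left (M ^ 2))
  calc ‖coeff n (qExp q)‖ ^ 2 * x ^ n
      = (‖coeff n (qExp q)‖ * s ^ n) ^ 2 * (x / s ^ 2) ^ n := by
        rw [div_pow, mul_pow, pow_right_comm s 2 n]
        field_simp
    _ ≤ M ^ 2 * (x / s ^ 2) ^ n := by
        gcongr
        exact hM (Set.mem_range_self n)

end RCLike

end qExp

section Rotation

theorem norm_one_sub_fourierChar_sq (x : ℝ) :
    ‖1 - (𝐞 x : ℂ)‖ ^ 2 = 2 * (1 - Real.cos (2 * Real.pi * x)) := by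
  rw [Real.fourierChar_apply, Complex.sq_norm, Complex.normSq_apply]
  simp only [Complex.sub_re, Complex.sub_im, Complex.one_re, Complex.one_im,
    Complex.exp_ofReal_mul_I_re, Complex.exp_ofReal_mul_I_im]
  linear_combination Real.sin_sq_add_cos_sq (2 * Real.pi * x)

theorem norm_one_sub_fourierChar (x : ℝ) : ‖1 - (𝐞 x : ℂ)‖ = 2 * |Real.sin (Real.pi * x)| := by
  have h := Complex.norm_exp_I_mul_ofReal_sub_one (2 * Real.pi * x)
  rw [mul_comm Complex.I, ← Real.fourierChar_apply, norm_sub_rev, mul_assoc,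
    mul_div_cancel_left₀ _ two_ne_zero] at h
  simpa using h

theorem four_mul_abs_sub_round_le_norm_one_sub_fourierChar (x : ℝ) :
    4 * |x - round x| ≤ ‖1 - (𝐞 x : ℂ)‖ := by
  have hperiod : |Real.sin (Real.pi * x)| = |Real.sin (Real.pi * (x - round x))| := by
    rw [mul_sub, mul_comm Real.pi (round x : ℝ), Real.sin_sub_int_mul_pi, abs_mul,
      abs_neg_one_zpow, one_mul]
  have hhalf : |Real.pi * (x - round x)| ≤ Real.pi / 2 := by
    rw [abs_mul, abs_of_pos Real.pi_pos]
    linarith [mul_le_mul_of_nonneg_left (abs_sub_round x) Real.pi_pos.le]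
  have hjordan := Real.mul_abs_le_abs_sin hhalf
  rw [abs_mul, abs_of_pos Real.pi_pos, ← mul_assoc, div_mul_cancel₀ _ Real.pi_ne_zero] at hjordan
  rw [norm_one_sub_fourierChar, hperiod]
  linarith

theorem fourierChar_pow (α : ℝ) (k : ℕ) : (𝐞 α : ℂ) ^ k = 𝐞 (k * α) := by
  rw [← Circle.coe_pow, ← AddChar.map_nsmul_eq_pow, nsmul_eq_mul]

theorem not_isOfFinOrder_fourierChar {α : ℝ} (hα : Irrational α) :
    ¬IsOfFinOrder (𝐞 α : ℂ) := by
  rw [isOfFinOrder_iff_pow_eq_one]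
  rintro ⟨k, hk, h⟩
  have hround : 4 * |k * α - round (k * α)| ≤ 0 := by
    simpa [← fourierChar_pow, h] using
      four_mul_abs_sub_round_le_norm_one_sub_fourierChar (k * α)
  refine (hα.natCast_mul hk.ne').ne_int (round (k * α)) (sub_eq_zero.1 (abs_eq_zero.1 ?_))
  linarith [abs_nonneg (k * α - round (k * α))]

theorem inv_prod_D (α : ℝ) (k : ℕ) :
    (∏ j ∈ Icc 1 k, D α j)⁻¹ = ‖PowerSeries.coeff k (qExp (𝐞 α : ℂ))‖ ^ 2 := by
  have hfactor : ∀ j : ℕ, D α j = ‖1 - (𝐞 α : ℂ) ^ j‖ ^ 2 := fun j => by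
    rw [fourierChar_pow, norm_one_sub_fourierChar_sq, D, mul_assoc]
  simp only [qExp, PowerSeries.coeff_mk, norm_inv, norm_prod, inv_pow, ← prod_pow, hfactor]

end Rotation

/-- Real numbers whose distance to `p / q` is never exponentially small in `q`. This is much weaker
than bad approximability, and is the Diophantine input needed for convergence. -/
def SubexponentiallyApproximable (α : ℝ) : Prop :=
  ∀ s ∈ Set.Ioo (0 : ℝ) 1, ∃ c > (0 : ℝ), ∀ (p : ℤ) (q : ℕ), 0 < q → c * s ^ q ≤ |α - p / q|

namespace SubexponentiallyApproximable

variable {α : ℝ}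

theorem of_div_sq_le {c : ℝ} (hc : 0 < c)
    (h : ∀ (p : ℤ) (q : ℕ), 0 < q → c / (q : ℝ) ^ 2 ≤ |α - p / q|) :
    SubexponentiallyApproximable α := by
  rintro s ⟨hs0, hs1⟩
  obtain ⟨B, hB⟩ := (tendsto_pow_const_mul_const_pow_of_abs_lt_one 2
    (abs_lt.2 ⟨by linarith, hs1⟩)).bddAbove_range
  have hBq : ∀ q : ℕ, (q : ℝ) ^ 2 * s ^ q ≤ B := fun q => hB (Set.mem_range_self q)
  have hB0 : 0 < B := hs0.trans_le (by simpa using hBq 1)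
  refine ⟨c / B, div_pos hc hB0, fun p q hq => le_trans ?_ (h p q hq)⟩
  rw [div_mul_eq_mul_div, div_le_div_iff₀ hB0 (by positivity)]
  linarith [mul_le_mul_of_nonneg_left (hBq q) hc.le]

theorem exists_le_norm_one_sub_fourierChar_pow (hα : SubexponentiallyApproximable α) {s : ℝ}
    (hs : s ∈ Set.Ioo (0 : ℝ) 1) :
    ∃ c > (0 : ℝ), ∀ k : ℕ, 0 < k → c * s ^ k ≤ ‖1 - (𝐞 α : ℂ) ^ k‖ := by
  obtain ⟨c, hc, h⟩ := hα s hs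
  refine ⟨4 * c, by positivity, fun k hk => ?_⟩
  have hk1 : (1 : ℝ) ≤ k := by exact_mod_cast hk
  have hk0 : (0 : ℝ) < k := one_pos.trans_le hk1
  calc 4 * c * s ^ k = 4 * (c * s ^ k) := mul_assoc _ _ _
    _ ≤ 4 * |α - round (k * α) / k| := by gcongr; exact h _ k hk
    _ ≤ 4 * (k * |α - round (k * α) / k|) := by
        gcongr
        exact le_mul_of_one_le_left (abs_nonneg _) hk1
    _ = 4 * |k * α - round (k * α)| := by
        rw [← abs_of_pos hk0, ← abs_mul, abs_of_pos hk0, mul_sub, mul_div_cancel₀ _ hk0.ne']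
    _ ≤ ‖1 - (𝐞 α : ℂ) ^ k‖ := by
        rw [fourierChar_pow]
        exact four_mul_abs_sub_round_le_norm_one_sub_fourierChar _

theorem summable_norm_inv_one_sub_fourierChar_pow (hα : SubexponentiallyApproximable α) {r : ℝ}
    (hr0 : 0 ≤ r) (hr1 : r < 1) :
    Summable fun n => ‖(1 - (𝐞 α : ℂ) ^ (n + 1))⁻¹‖ * r ^ (n + 1) := by
  obtain ⟨s, hrs, hs1⟩ := exists_between hr1
  have hs0 : 0 < s := hr0.trans_lt hrs
  obtain ⟨c, hc, h⟩ := hα.exists_le_norm_one_sub_fourierChar_pow ⟨hs0, hs1⟩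
  have hgeom : Summable fun n : ℕ => (r / s) ^ n :=
    summable_geometric_of_lt_one (by positivity) ((div_lt_one hs0).2 hrs)
  refine .of_nonneg_of_le (fun n => by positivity) (fun n => ?_)
    (((summable_nat_add_iff 1).2 hgeom).mul_left c⁻¹)
  calc ‖(1 - (𝐞 α : ℂ) ^ (n + 1))⁻¹‖ * r ^ (n + 1)
      ≤ (c * s ^ (n + 1))⁻¹ * r ^ (n + 1) := by
        rw [norm_inv]
        gcongr
        exact h (n + 1) n.succ_pos
    _ = c⁻¹ * (r / s) ^ (n + 1) := by
        rw [mul_inv, div_pow, div_eq_mul_inv]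
        ring

end SubexponentiallyApproximable

theorem stmt7_general (α : ℝ) (hirr : Irrational α) :
    (SubexponentiallyApproximable α → ∀ x : ℂ, ‖x‖ < 1 →
      Summable fun k : ℕ => x ^ k / ∏ j ∈ Finset.Icc 1 k, (D α j : ℂ)) ∧
    (∀ r : ℝ, 1 < r →
      ¬ Summable fun k : ℕ => r ^ k / ∏ j ∈ Finset.Icc 1 k, D α j) := by
  have hq := not_isOfFinOrder_fourierChar hirr
  refine ⟨fun hα x hx => .of_norm ?_, fun r hr hsum => ?_⟩
  · convert qExp.summable_norm_coeff_sq_mul_pow hq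
      (fun r => hα.summable_norm_inv_one_sub_fourierChar_pow) (norm_nonneg x) hx using 2 with k
    rw [← Complex.ofReal_prod, div_eq_inv_mul, ← Complex.ofReal_inv, inv_prod_D]
    simp
  · refine qExp.not_summable_norm_coeff hq (Circle.norm_coe _)
      (summable_of_summable_sq_mul_pow (fun n => norm_nonneg _) hr ?_)
    simpa only [div_eq_inv_mul, inv_prod_D] using hsum

/-- for a badly approximable irrational `α`, the power series
`Σ_{k≥0} x^k/(D(1)⋯D(k))` has radius of convergence exactly `1`: it converges for
`‖x‖ < 1` and diverges for real `r > 1`. -/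
theorem stmt7 (α : ℝ) (hirr : Irrational α)
    (hbad : ∃ c > (0 : ℝ), ∀ (p : ℤ) (q : ℕ), 0 < q → c / (q : ℝ) ^ 2 ≤ |α - p / q|) :
    (∀ x : ℂ, ‖x‖ < 1 →
      Summable fun k : ℕ => x ^ k / ∏ j ∈ Finset.Icc 1 k, (D α j : ℂ)) ∧
    (∀ r : ℝ, 1 < r →
      ¬ Summable fun k : ℕ => r ^ k / ∏ j ∈ Finset.Icc 1 k, D α j) := by
  obtain ⟨c, hc, hcα⟩ := hbad
  exact (stmt7_general α hirr).imp_left fun h => h (.of_div_sq_le hc hcα)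
end

section
/- Let α be a badly approximable irrational real number. Then the Birkhoff averages of log D along the orbit of 0 under the rotation by α tend to zero: lim_{n→∞} (1/n)·Σ_{j=1}^{n} log(2 − 2cos(2πjα)) = 0. -/
open Filter

/-!
Write `w = e^{2πiα}`, so that `log (2 - 2 cos (2πjα)) = 2 log ‖1 - w ^ j‖`. For `0 < r < 1` the
regularised averages of `log ‖1 - r w ^ j‖` tend to `0`: expand the logarithm into its power series
and average each power `(w ^ k) ^ j` as a geometric sum. Since `‖1 - r z‖² = (1 - r)² + r ‖1 - z‖²`
on the unit circle, removing the regularisation costs at most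
`-(log r) / 2 + 2 √((1 - r) / ‖1 - z‖)` at each point, which is small on average as `r → 1` provided
that the averages of `‖1 - w ^ j‖ ^ (-1/2)` stay bounded. They do: bad approximability separates the
distances from `α, 2α, …, nα` to the nearest integer by a constant multiple of `1 / n`, so the sum
of their inverse square roots is at most that of an arithmetic progression.
-/

open Finset Real Topology
open scoped BigOperators FourierTransform

section PowerAverages

lemma tendsto_expect_pow_nhds_zero {z : ℂ} (hz : ‖z‖ ≤ 1) (hz1 : z ≠ 1) :
    Tendsto (fun n : ℕ => 𝔼 j ∈ Icc 1 n, z ^ j) atTop (𝓝 0) := by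
  have hlim : Tendsto (fun n : ℕ => 2 / ‖z - 1‖ / n) atTop (𝓝 0) :=
    tendsto_const_div_atTop_nhds_zero_nat _
  refine squeeze_zero_norm (fun n => ?_) hlim
  have hsum : ∑ j ∈ Icc 1 n, z ^ j = (z ^ (n + 1) - z) / (z - 1) := by
    rw [← Ico_add_one_right_eq_Icc, geom_sum_Ico hz1 (by omega), pow_one]
  have hnum : ‖z ^ (n + 1) - z‖ ≤ 2 := by
    have hpow : ‖z ^ (n + 1)‖ ≤ 1 := (norm_pow z _).trans_le (pow_le_one₀ (norm_nonneg z) hz)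
    linarith [norm_sub_le (z ^ (n + 1)) z]
  rw [expect_eq_sum_div_card, hsum, Nat.card_Icc, Nat.add_sub_cancel, norm_div, norm_div,
    Complex.norm_natCast]
  gcongr

lemma norm_expect_pow_le_one {z : ℂ} (hz : ‖z‖ ≤ 1) (s : Finset ℕ) : ‖𝔼 j ∈ s, z ^ j‖ ≤ 1 := by
  rcases s.eq_empty_or_nonempty with rfl | hs
  · simp
  exact (RCLike.norm_expect_le (K := ℂ)).trans
    (expect_le hs fun j _ => (norm_pow z j).trans_le (pow_le_one₀ (norm_nonneg z) hz))

lemma expect_tsum_mul_pow {a : ℕ → ℂ} (ha : Summable fun k => ‖a k‖) {w : ℂ} (hw : ‖w‖ ≤ 1)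
    (s : Finset ℕ) :
    𝔼 j ∈ s, ∑' k, a k * (w ^ j) ^ k = ∑' k, a k * 𝔼 j ∈ s, (w ^ k) ^ j := by
  have hsummable (j : ℕ) : Summable fun k => a k * (w ^ j) ^ k := by
    refine ha.of_norm_bounded fun k => ?_
    rw [norm_mul, norm_pow, norm_pow]
    exact mul_le_of_le_one_right (norm_nonneg _)
      (pow_le_one₀ (by positivity) (pow_le_one₀ (norm_nonneg w) hw))
  rw [expect_eq_sum_div_card, ← Summable.tsum_finsetSum fun j _ => hsummable j, ← tsum_div_const]
  refine tsum_congr fun k => ?_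
  rw [mul_expect, expect_eq_sum_div_card]
  simp only [← pow_mul, mul_comm k]

lemma tendsto_expect_tsum_mul_pow {a : ℕ → ℂ} (ha : Summable fun k => ‖a k‖) {w : ℂ}
    (hw : ‖w‖ ≤ 1) (hroot : ∀ k : ℕ, 0 < k → w ^ k ≠ 1) :
    Tendsto (fun n : ℕ => 𝔼 j ∈ Icc 1 n, ∑' k, a k * (w ^ j) ^ k) atTop (𝓝 (a 0)) := by
  have hpow (k : ℕ) : ‖w ^ k‖ ≤ 1 := (norm_pow w k).trans_le (pow_le_one₀ (norm_nonneg w) hw)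
  have hterm (k : ℕ) : Tendsto (fun n : ℕ => a k * 𝔼 j ∈ Icc 1 n, (w ^ k) ^ j) atTop
      (𝓝 (if k = 0 then a 0 else 0)) := by
    split_ifs with hk
    · subst hk
      refine tendsto_const_nhds.congr' ?_
      filter_upwards [eventually_ge_atTop 1] with n hn
      simp only [pow_zero, one_pow, expect_const (nonempty_Icc.2 hn), mul_one]
    · simpa using
        (tendsto_expect_pow_nhds_zero (hpow k) (hroot k (Nat.pos_of_ne_zero hk))).const_mul (a k)
  have hbound (n k : ℕ) : ‖a k * 𝔼 j ∈ Icc 1 n, (w ^ k) ^ j‖ ≤ ‖a k‖ := by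
    rw [norm_mul]
    exact mul_le_of_le_one_right (norm_nonneg _) (norm_expect_pow_le_one (hpow k) _)
  have hlim := tendsto_tsum_of_dominated_convergence ha hterm (Eventually.of_forall hbound)
  rw [tsum_ite_eq] at hlim
  exact hlim.congr fun n => (expect_tsum_mul_pow ha hw _).symm

lemma tendsto_expect_log_norm_one_sub_mul_pow {r w : ℂ} (hr : ‖r‖ < 1) (hw : ‖w‖ ≤ 1)
    (hroot : ∀ k : ℕ, 0 < k → w ^ k ≠ 1) :
    Tendsto (fun n : ℕ => 𝔼 j ∈ Icc 1 n, log ‖1 - r * w ^ j‖) atTop (𝓝 0) := by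
  have hsummable : Summable fun k : ℕ => ‖-(r ^ k / k)‖ := by
    refine (summable_geometric_of_lt_one (norm_nonneg r) hr).of_nonneg_of_le
      (fun _ => norm_nonneg _) fun k => ?_
    rcases k.eq_zero_or_pos with rfl | hk
    · simp
    rw [norm_neg, norm_div, norm_pow, Complex.norm_natCast]
    exact div_le_self (by positivity) (by exact_mod_cast hk)
  have hseries (j : ℕ) : ∑' k : ℕ, -(r ^ k / k) * (w ^ j) ^ k = Complex.log (1 - r * w ^ j) := by
    have hnorm : ‖r * w ^ j‖ < 1 := by
      rw [norm_mul, norm_pow]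
      exact mul_lt_one_of_nonneg_of_lt_one_left (norm_nonneg r) hr (pow_le_one₀ (norm_nonneg w) hw)
    rw [← neg_neg (Complex.log _), ← (Complex.hasSum_taylorSeries_neg_log hnorm).neg.tsum_eq]
    exact tsum_congr fun k => by ring
  have hlim := (Complex.continuous_re.tendsto _).comp
    (tendsto_expect_tsum_mul_pow hsummable hw hroot)
  simp only [hseries] at hlim
  convert hlim using 2 with n
  · simp only [Function.comp_apply, ← Complex.log_re]
    rw [Complex.re_expect]
  · simp

end PowerAverages

section Regularisation

lemma sq_norm_one_sub_ofReal_mul {z : ℂ} (hz : ‖z‖ = 1) (r : ℝ) :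
    ‖1 - r * z‖ ^ 2 = (1 - r) ^ 2 + r * ‖1 - z‖ ^ 2 := by
  have hz2 : z.re * z.re + z.im * z.im = 1 := by
    rw [← Complex.normSq_apply, Complex.normSq_eq_norm_sq, hz, one_pow]
  simp only [← Complex.normSq_eq_norm_sq, Complex.normSq_apply, Complex.sub_re, Complex.sub_im,
    Complex.one_re, Complex.one_im, Complex.re_ofReal_mul, Complex.im_ofReal_mul]
  linear_combination (r ^ 2 - r) * hz2

lemma log_one_add_le_two_mul_sqrt {x : ℝ} (hx : 0 ≤ x) : log (1 + x) ≤ 2 * √x := by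
  calc log (1 + x) ≤ log ((1 + √x) ^ 2) := by
        gcongr
        linarith [sq_sqrt hx, sqrt_nonneg x]
    _ = 2 * log (1 + √x) := by rw [log_pow, Nat.cast_ofNat]
    _ ≤ 2 * √x := by linarith [log_le_sub_one_of_pos (show 0 < 1 + √x by positivity)]

lemma log_norm_one_sub_le_sub_log_div_two {z : ℂ} (hz : ‖z‖ = 1) (hz1 : z ≠ 1) {r : ℝ}
    (hr : 0 < r) :
    log ‖1 - z‖ ≤ log ‖1 - r * z‖ - log r / 2 := by
  have hpos : 0 < ‖1 - z‖ := norm_pos_iff.2 (sub_ne_zero.2 hz1.symm)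
  have hle : log (r * ‖1 - z‖ ^ 2) ≤ log (‖1 - r * z‖ ^ 2) := by
    rw [sq_norm_one_sub_ofReal_mul hz]
    gcongr
    linarith [sq_nonneg (1 - r)]
  rw [log_mul hr.ne' (by positivity), log_pow, log_pow] at hle
  push_cast at hle
  linarith

lemma log_norm_one_sub_ofReal_mul_le_add_sqrt {z : ℂ} (hz : ‖z‖ ≤ 1) (hz1 : z ≠ 1) {r : ℝ}
    (hr0 : 0 ≤ r) (hr1 : r < 1) :
    log ‖1 - r * z‖ ≤ log ‖1 - z‖ + 2 * √((1 - r) / ‖1 - z‖) := by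
  have hpos : 0 < ‖1 - z‖ := norm_pos_iff.2 (sub_ne_zero.2 hz1.symm)
  have hδ : 0 ≤ 1 - r := by linarith
  have hrz : r * z ≠ 1 := by
    intro h
    have : r * ‖z‖ = 1 := by simpa [abs_of_nonneg hr0] using congrArg norm h
    nlinarith
  have htriangle : ‖1 - r * z‖ ≤ ‖1 - z‖ * (1 + (1 - r) / ‖1 - z‖) := by
    calc ‖1 - r * z‖ = ‖(r : ℂ) * (1 - z) + (1 - r : ℝ)‖ := by push_cast; ring_nf
      _ ≤ r * ‖1 - z‖ + (1 - r) := by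
        refine (norm_add_le _ _).trans_eq ?_
        rw [norm_mul, Complex.norm_of_nonneg hr0, Complex.norm_of_nonneg hδ]
      _ ≤ ‖1 - z‖ + (1 - r) := by gcongr; exact mul_le_of_le_one_left hpos.le hr1.le
      _ = ‖1 - z‖ * (1 + (1 - r) / ‖1 - z‖) := by field_simp
  calc log ‖1 - r * z‖ ≤ log (‖1 - z‖ * (1 + (1 - r) / ‖1 - z‖)) :=
        log_le_log (norm_pos_iff.2 (sub_ne_zero.2 hrz.symm)) htriangle
    _ = log ‖1 - z‖ + log (1 + (1 - r) / ‖1 - z‖) := log_mul hpos.ne' (by positivity)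
    _ ≤ log ‖1 - z‖ + 2 * √((1 - r) / ‖1 - z‖) := by
        gcongr
        exact log_one_add_le_two_mul_sqrt (by positivity)

lemma abs_log_norm_one_sub_sub_log_le {z : ℂ} (hz : ‖z‖ = 1) (hz1 : z ≠ 1) {r : ℝ} (hr0 : 0 < r)
    (hr1 : r < 1) :
    |log ‖1 - z‖ - log ‖1 - r * z‖| ≤ -log r / 2 + 2 * √(1 - r) * (√‖1 - z‖)⁻¹ := by
  have hupper := log_norm_one_sub_le_sub_log_div_two hz hz1 hr0
  have hlower := log_norm_one_sub_ofReal_mul_le_add_sqrt hz.le hz1 hr0.le hr1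
  rw [sqrt_div (by linarith), div_eq_mul_inv, ← mul_assoc] at hlower
  have hlog : log r ≤ 0 := log_nonpos hr0.le hr1.le
  have hsqrt : 0 ≤ 2 * √(1 - r) * (√‖1 - z‖)⁻¹ := by positivity
  rw [abs_le]
  constructor <;> linarith

lemma abs_expect_log_norm_one_sub_sub_expect_log_le {ι : Type*} {s : Finset ι} (hs : s.Nonempty)
    {z : ι → ℂ} (hz : ∀ j ∈ s, ‖z j‖ = 1) (hz1 : ∀ j ∈ s, z j ≠ 1) {r : ℝ} (hr0 : 0 < r)
    (hr1 : r < 1) :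
    |𝔼 j ∈ s, log ‖1 - z j‖ - 𝔼 j ∈ s, log ‖1 - r * z j‖| ≤
      -log r / 2 + 2 * √(1 - r) * 𝔼 j ∈ s, (√‖1 - z j‖)⁻¹ := by
  rw [← expect_sub_distrib]
  refine (abs_expect_le _ _).trans ?_
  rw [← expect_const hs (-log r / 2), mul_expect, ← expect_add_distrib]
  exact expect_le_expect fun j hj => abs_log_norm_one_sub_sub_log_le (hz j hj) (hz1 j hj) hr0 hr1

theorem tendsto_expect_log_norm_one_sub_pow {w : ℂ} (hw : ‖w‖ = 1)
    (hroot : ∀ k : ℕ, 0 < k → w ^ k ≠ 1) {C : ℝ}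
    (hC : ∀ n : ℕ, 𝔼 j ∈ Icc 1 n, (√‖1 - w ^ j‖)⁻¹ ≤ C) :
    Tendsto (fun n : ℕ => 𝔼 j ∈ Icc 1 n, log ‖1 - w ^ j‖) atTop (𝓝 0) := by
  have herror : Tendsto (fun r : ℝ => -log r / 2 + 2 * √(1 - r) * C) (𝓝[<] 1) (𝓝 0) := by
    have hcont : ContinuousAt (fun r : ℝ => -log r / 2 + 2 * √(1 - r) * C) 1 := by
      fun_prop (disch := norm_num)
    simpa using hcont.tendsto.mono_left nhdsWithin_le_nhds
  have hunit : ∀ᶠ r : ℝ in 𝓝[<] 1, 0 < r ∧ r < 1 := Ioo_mem_nhdsLT one_pos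
  have huniform : TendstoUniformlyOnFilter
      (fun (r : ℝ) (n : ℕ) => 𝔼 j ∈ Icc 1 n, log ‖1 - r * w ^ j‖)
      (fun n => 𝔼 j ∈ Icc 1 n, log ‖1 - w ^ j‖) (𝓝[<] 1) atTop := by
    rw [Metric.tendstoUniformlyOnFilter_iff]
    intro ε hε
    filter_upwards [(hunit.and (herror.eventually_lt_const hε)).prod_mk
      (eventually_ge_atTop 1)] with ⟨r, n⟩ ⟨⟨⟨hr0, hr1⟩, hrε⟩, hn⟩
    refine (abs_expect_log_norm_one_sub_sub_expect_log_le (nonempty_Icc.2 hn) (by simp [hw])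
      (fun j hj => hroot j (mem_Icc.1 hj).1) hr0 hr1).trans_lt (lt_of_le_of_lt ?_ hrε)
    gcongr
    exact hC n
  refine huniform.tendsto_of_eventually_tendsto (L := fun _ => 0) ?_ tendsto_const_nhds
  filter_upwards [hunit] with r ⟨hr0, hr1⟩
  exact tendsto_expect_log_norm_one_sub_mul_pow
    (by rwa [Complex.norm_of_nonneg hr0.le]) hw.le hroot

end Regularisation

section Separation

lemma sum_range_inv_sqrt_le (n : ℕ) : ∑ i ∈ range n, (√(i + 1 : ℕ))⁻¹ ≤ 2 * √n := by
  induction n with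
  | zero => simp
  | succ n ih =>
    have hpos : 0 < √(n + 1 : ℕ) := sqrt_pos.2 (by positivity)
    have hsq : √(n + 1 : ℕ) ^ 2 = √n ^ 2 + 1 := by
      rw [sq_sqrt (by positivity), sq_sqrt (by positivity), Nat.cast_succ]
    have hstep : (√(n + 1 : ℕ))⁻¹ ≤ 2 * √(n + 1 : ℕ) - 2 * √n := by
      rw [inv_le_iff_one_le_mul₀ hpos]
      nlinarith [sq_nonneg (√(n + 1 : ℕ) - √n)]
    rw [sum_range_succ]
    linarith

variable {ι : Type*} {t : Finset ι} {d : ι → ℝ} {δ : ℝ}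

lemma card_mul_le_of_separated (hδ : ∀ j ∈ t, δ ≤ d j)
    (hsep : (t : Set ι).Pairwise fun j k => δ ≤ |d j - d k|) {x : ℝ} (hx0 : 0 ≤ x)
    (hx : ∀ j ∈ t, d j ≤ x) : #t * δ ≤ x := by
  classical
  induction t using induction_on_max_value d generalizing x with
  | empty => simpa using hx0
  | insert a t ha hmax ih =>
    simp only [forall_mem_insert] at hδ hx
    rw [coe_insert, Set.pairwise_insert_of_notMem (by simpa using ha)] at hsep
    have hle : ∀ j ∈ t, d j ≤ d a - δ := fun j hj => by
      have := (hsep.2 j hj).1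
      rw [abs_of_nonneg (sub_nonneg.2 (hmax j hj))] at this
      linarith
    have := ih hδ.2 hsep.1 (by linarith) hle
    rw [card_insert_of_notMem ha]
    push_cast
    linarith

lemma sum_le_sum_range_of_separated (hδ0 : 0 < δ) (hδ : ∀ j ∈ t, δ ≤ d j)
    (hsep : (t : Set ι).Pairwise fun j k => δ ≤ |d j - d k|) {f : ℝ → ℝ}
    (hf : AntitoneOn f (Set.Ioi 0)) :
    ∑ j ∈ t, f (d j) ≤ ∑ i ∈ range #t, f ((i + 1 : ℕ) * δ) := by
  classical
  induction t using induction_on_max_value d with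
  | empty => simp
  | insert a t ha hmax ih =>
    have hcard : ((#t + 1 : ℕ) : ℝ) * δ ≤ d a := by
      rw [← card_insert_of_notMem ha]
      exact card_mul_le_of_separated hδ hsep (hδ0.le.trans (hδ a (mem_insert_self a t)))
        (by simpa using hmax)
    have hpos : 0 < ((#t + 1 : ℕ) : ℝ) * δ := by positivity
    rw [sum_insert ha, card_insert_of_notMem ha, sum_range_succ, add_comm]
    gcongr
    · exact ih (fun j hj => hδ j (mem_insert_of_mem hj))
        (hsep.mono (by simp))
    · exact hf hpos (hpos.trans_le hcard) hcard

lemma sum_inv_sqrt_le_of_separated (hδ0 : 0 < δ) (hδ : ∀ j ∈ t, δ ≤ d j)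
    (hsep : (t : Set ι).Pairwise fun j k => δ ≤ |d j - d k|) :
    ∑ j ∈ t, (√(d j))⁻¹ ≤ 2 * √(#t / δ) := by
  have hanti : AntitoneOn (fun x : ℝ => (√x)⁻¹) (Set.Ioi 0) := fun x hx y _ hxy =>
    inv_anti₀ (sqrt_pos.2 hx) (sqrt_le_sqrt hxy)
  calc ∑ j ∈ t, (√(d j))⁻¹ ≤ ∑ i ∈ range #t, (√((i + 1 : ℕ) * δ))⁻¹ :=
        sum_le_sum_range_of_separated hδ0 hδ hsep hanti
    _ = (∑ i ∈ range #t, (√(i + 1 : ℕ))⁻¹) / √δ := by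
        rw [sum_div]
        refine sum_congr rfl fun i _ => ?_
        rw [sqrt_mul (by positivity), mul_inv, div_eq_mul_inv]
    _ ≤ 2 * √(#t) / √δ := by gcongr; exact sum_range_inv_sqrt_le _
    _ = 2 * √(#t / δ) := by rw [sqrt_div (by positivity), mul_div_assoc]

end Separation

section Circle

lemma exists_coe_eq_and_abs_eq_norm {p : ℝ} (x : AddCircle p) :
    ∃ a : ℝ, (a : AddCircle p) = x ∧ |a| = ‖x‖ := by
  induction x using QuotientAddGroup.induction_on with | H a =>
  refine ⟨a - round (p⁻¹ * a) * p, ?_, (AddCircle.norm_eq p).symm⟩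
  rw [← zsmul_eq_mul, AddCircle.coe_sub, AddCircle.coe_zsmul, AddCircle.coe_period, smul_zero,
    sub_zero]

lemma min_norm_sub_norm_add_le_abs_norm_sub_norm {p : ℝ} (x y : AddCircle p) :
    min ‖x - y‖ ‖x + y‖ ≤ |‖x‖ - ‖y‖| := by
  obtain ⟨a, rfl, ha⟩ := exists_coe_eq_and_abs_eq_norm x
  obtain ⟨b, rfl, hb⟩ := exists_coe_eq_and_abs_eq_norm y
  have hsub : ‖(a - b : AddCircle p)‖ ≤ |a - b| := QuotientAddGroup.norm_mk_le_norm
  have hadd : ‖(a + b : AddCircle p)‖ ≤ |a + b| := QuotientAddGroup.norm_mk_le_norm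
  rw [← ha, ← hb, min_le_iff]
  have : |a - b| = |(|a| - |b|)| ∨ |a + b| = |(|a| - |b|)| := by
    grind
  exact this.imp hsub.trans_eq hadd.trans_eq

lemma sq_norm_one_sub_fourierChar (x : ℝ) : ‖1 - (𝐞 x : ℂ)‖ ^ 2 = 2 - 2 * cos (2 * π * x) := by
  rw [fourierChar_apply, ← Complex.normSq_eq_norm_sq, Complex.normSq_apply]
  simp only [Complex.sub_re, Complex.sub_im, Complex.one_re, Complex.one_im,
    Complex.exp_ofReal_mul_I_re, Complex.exp_ofReal_mul_I_im]
  linear_combination sin_sq_add_cos_sq (2 * π * x)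

lemma four_mul_norm_le_norm_one_sub_fourierChar (x : ℝ) :
    4 * ‖(x : UnitAddCircle)‖ ≤ ‖1 - (𝐞 x : ℂ)‖ := by
  set y := x - round x with hy
  have hcos : cos (2 * π * x) = cos (2 * π * y) := by
    rw [hy, mul_sub, mul_comm (2 * π) (round x : ℝ), cos_sub_int_mul_two_pi]
  have habs : |2 * π * y| ≤ π := by
    rw [abs_mul, abs_of_pos two_pi_pos]
    nlinarith [abs_sub_round x, pi_pos]
  have hbound : cos (2 * π * y) ≤ 1 - 8 * y ^ 2 := by
    refine (cos_le_one_sub_mul_cos_sq habs).trans_eq ?_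
    field_simp
    ring
  refine le_of_sq_le_sq ?_ (norm_nonneg _)
  rw [sq_norm_one_sub_fourierChar, UnitAddCircle.norm_eq, mul_pow, sq_abs, hcos]
  linarith

lemma fourierChar_natCast_mul (j : ℕ) (x : ℝ) : (𝐞 (j * x) : ℂ) = (𝐞 x : ℂ) ^ j := by
  rw [← nsmul_eq_mul, AddChar.map_nsmul_eq_pow, Circle.coe_pow]

lemma exists_int_eq_of_fourierChar_eq_one {x : ℝ} (h : (𝐞 x : ℂ) = 1) : ∃ m : ℤ, x = m := by
  have hnorm := four_mul_norm_le_norm_one_sub_fourierChar x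
  rw [h, sub_self, norm_zero, UnitAddCircle.norm_eq] at hnorm
  have hzero : |x - round x| = 0 := by linarith [abs_nonneg (x - round x)]
  exact ⟨round x, sub_eq_zero.1 (abs_eq_zero.1 hzero)⟩

lemma fourierChar_pow_ne_one_of_irrational {x : ℝ} (hx : Irrational x) {k : ℕ} (hk : 0 < k) :
    (𝐞 x : ℂ) ^ k ≠ 1 := by
  rw [← fourierChar_natCast_mul]
  intro h
  obtain ⟨m, hm⟩ := exists_int_eq_of_fourierChar_eq_one h
  exact (hx.natCast_mul hk.ne').ne_int m hm

end Circle

/-- `α` is badly approximable (of bounded type) with constant `c`. The sign of `c` is not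
part of the notion: every `α` qualifies when `c ≤ 0`. -/
def IsBadlyApproximableWith (c α : ℝ) : Prop :=
  ∀ (p : ℤ) (q : ℕ), 0 < q → c / (q : ℝ) ^ 2 ≤ |α - p / q|

namespace IsBadlyApproximableWith

variable {c α : ℝ}

lemma div_le_norm_nsmul (h : IsBadlyApproximableWith c α) {q : ℕ} (hq : 0 < q) :
    c / q ≤ ‖q • (α : UnitAddCircle)‖ := by
  have hq' : (0 : ℝ) < q := by exact_mod_cast hq
  rw [← AddCircle.coe_nsmul, nsmul_eq_mul, UnitAddCircle.norm_eq]
  calc c / q = q * (c / (q : ℝ) ^ 2) := by field_simp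
    _ ≤ q * |α - round (q * α) / q| := by gcongr; exact h _ _ hq
    _ = |q * α - round (q * α)| := by
      rw [← abs_of_pos hq', ← abs_mul, abs_of_pos hq']
      congr 1
      field_simp

lemma div_le_abs_norm_nsmul_sub_norm_nsmul (h : IsBadlyApproximableWith c α) (hc : 0 ≤ c)
    {n j k : ℕ} (hjk : j < k) (hk : k ≤ n) :
    c / (2 * n) ≤ |‖k • (α : UnitAddCircle)‖ - ‖j • (α : UnitAddCircle)‖| := by
  have hle {q : ℕ} (hq : 0 < q) (hqn : q ≤ 2 * n) : c / (2 * n) ≤ ‖q • (α : UnitAddCircle)‖ := by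
    refine le_trans ?_ (h.div_le_norm_nsmul hq)
    gcongr
    exact_mod_cast hqn
  refine (le_min ?_ ?_).trans (min_norm_sub_norm_add_le_abs_norm_sub_norm _ _)
  · rw [sub_eq_add_neg, ← sub_nsmul _ hjk.le]
    exact hle (by omega) (by omega)
  · rw [← add_nsmul]
    exact hle (by omega) (by omega)

lemma expect_inv_sqrt_norm_nsmul_le (h : IsBadlyApproximableWith c α) (hc : 0 < c) (n : ℕ) :
    𝔼 j ∈ Icc 1 n, (√‖j • (α : UnitAddCircle)‖)⁻¹ ≤ 2 * √(2 / c) := by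
  rcases n.eq_zero_or_pos with rfl | hn
  · rw [Icc_eq_empty_of_lt zero_lt_one, expect_empty]
    positivity
  have hn' : (0 : ℝ) < n := by exact_mod_cast hn
  have hlower : ∀ j ∈ Icc 1 n, c / (2 * n) ≤ ‖j • (α : UnitAddCircle)‖ := fun j hj => by
    simpa using h.div_le_abs_norm_nsmul_sub_norm_nsmul hc.le (mem_Icc.1 hj).1 (mem_Icc.1 hj).2
  have hsep : (↑(Icc 1 n) : Set ℕ).Pairwise fun j k =>
      c / (2 * n) ≤ |‖j • (α : UnitAddCircle)‖ - ‖k • (α : UnitAddCircle)‖| := by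
    intro j hj k hk hjk
    rcases hjk.lt_or_gt with hlt | hlt
    · rw [abs_sub_comm]
      exact h.div_le_abs_norm_nsmul_sub_norm_nsmul hc.le hlt (mem_Icc.1 hk).2
    · exact h.div_le_abs_norm_nsmul_sub_norm_nsmul hc.le hlt (mem_Icc.1 hj).2
  have hsum := sum_inv_sqrt_le_of_separated (by positivity) hlower hsep
  rw [Nat.card_Icc, Nat.add_sub_cancel] at hsum
  rw [expect_eq_sum_div_card, Nat.card_Icc, Nat.add_sub_cancel, div_le_iff₀ hn']
  calc _ ≤ 2 * √(n / (c / (2 * n))) := hsum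
    _ = 2 * √(2 / c * n ^ 2) := by congr 2; field_simp
    _ = 2 * √(2 / c) * n := by rw [sqrt_mul (by positivity), sqrt_sq hn'.le, mul_assoc]

lemma expect_inv_sqrt_norm_one_sub_fourierChar_pow_le (h : IsBadlyApproximableWith c α)
    (hc : 0 < c) (n : ℕ) :
    𝔼 j ∈ Icc 1 n, (√‖1 - (𝐞 α : ℂ) ^ j‖)⁻¹ ≤ 2 * √(2 / c) := by
  refine (expect_le_expect fun j hj => ?_).trans (h.expect_inv_sqrt_norm_nsmul_le hc n)
  have hj0 : 0 < j := (mem_Icc.1 hj).1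
  have hpos : 0 < ‖j • (α : UnitAddCircle)‖ :=
    lt_of_lt_of_le (by positivity) (h.div_le_norm_nsmul hj0)
  have hchord := four_mul_norm_le_norm_one_sub_fourierChar (j * α)
  rw [← nsmul_eq_mul, AddCircle.coe_nsmul, nsmul_eq_mul, fourierChar_natCast_mul] at hchord
  gcongr
  linarith

end IsBadlyApproximableWith

/-- for a badly approximable irrational `α`, the Birkhoff averages of
`log(2 - 2cos(2π·α))` along the orbit of `0` under the rotation by `α` tend to zero:
`(1/n)·Σ_{j=1}^n log(2 - 2cos(2πjα)) → 0`. -/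
theorem stmt8 (α : ℝ) (hirr : Irrational α)
    (hbad : ∃ c > (0 : ℝ), ∀ (p : ℤ) (q : ℕ), 0 < q → c / (q : ℝ) ^ 2 ≤ |α - p / q|) :
    Tendsto
      (fun n : ℕ => (1 / n : ℝ) *
        ∑ j ∈ Finset.Icc 1 n, Real.log (2 - 2 * Real.cos (2 * Real.pi * j * α)))
      atTop (nhds 0) := by
  obtain ⟨c, hc, hbad : IsBadlyApproximableWith c α⟩ := hbad
  have hlog (j : ℕ) : log (2 - 2 * cos (2 * π * j * α)) = 2 * log ‖1 - (𝐞 α : ℂ) ^ j‖ := by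
    rw [mul_assoc (2 * π), ← sq_norm_one_sub_fourierChar, fourierChar_natCast_mul, log_pow,
      Nat.cast_ofNat]
  have hlim := (tendsto_expect_log_norm_one_sub_pow (Circle.norm_coe (𝐞 α))
    (fun _ hk => fourierChar_pow_ne_one_of_irrational hirr hk)
    (hbad.expect_inv_sqrt_norm_one_sub_fourierChar_pow_le hc)).const_mul 2
  rw [mul_zero] at hlim
  refine hlim.congr fun n => ?_
  simp only [hlog, ← mul_sum, expect_eq_sum_div_card, Nat.card_Icc, Nat.add_sub_cancel]
  ring
end

section
/- For every real number x that is not an integer multiple of 2π, the series Σ_{k≥1} (e^{ikx} + e^{−ikx})/k = Σ_{k≥1} 2·cos(kx)/k converges and its sum equals −log(2 − 2cos x). -/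
open Filter

/-!
With `z = exp (i x)`, the series is twice the real part of the series `∑ zⁿ / n`, which should
converge to `-log (1 - z)`, and `|1 - z|² = 2 - 2 cos x`. On the unit circle away from `1` the
geometric sums `∑ zⁿ` are bounded, so the series converges by Dirichlet's test. Abel's limit theorem
then identifies its sum with the radial limit of `-log (1 - t z)` as `t → 1⁻`, and this is
`-log (1 - z)` because the principal logarithm is continuous at `1 - z`.
-/

section PowerSeries

open Finset Topology

theorem norm_geom_sum_le_two_div {K : Type*} [NormedDivisionRing K] {z : K} (hz : ‖z‖ ≤ 1)
    (hz1 : z ≠ 1) (N : ℕ) : ‖∑ n ∈ range N, z ^ n‖ ≤ 2 / ‖z - 1‖ := by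
  rw [geom_sum_eq hz1, norm_div]
  gcongr
  calc ‖z ^ N - 1‖ ≤ ‖z ^ N‖ + ‖(1 : K)‖ := norm_sub_le _ _
    _ ≤ 1 + 1 := by
      rw [norm_pow, norm_one]
      gcongr
      exact pow_le_one₀ (norm_nonneg z) hz
    _ = 2 := one_add_one_eq_two

theorem cauchySeq_sum_smul_pow_of_antitone {K : Type*} [NormedDivisionRing K] [NormedSpace ℝ K]
    {c : ℕ → ℝ} (hc : Antitone c) (hc0 : Tendsto c atTop (𝓝 0)) {z : K} (hz : ‖z‖ ≤ 1)
    (hz1 : z ≠ 1) : CauchySeq fun N ↦ ∑ n ∈ range N, c n • z ^ n :=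
  hc.cauchySeq_series_mul_of_tendsto_zero_of_bounded hc0 (norm_geom_sum_le_two_div hz hz1)

theorem tendsto_sum_range_of_tendsto_powerSeries {a : ℕ → ℂ} {F : ℝ → ℂ} {l : ℂ}
    (ha : CauchySeq fun N ↦ ∑ n ∈ range N, a n)
    (hF : ∀ᶠ t : ℝ in 𝓝[<] 1, HasSum (fun n ↦ a n * (t : ℂ) ^ n) (F t))
    (hl : Tendsto F (𝓝[<] 1) (𝓝 l)) :
    Tendsto (fun N ↦ ∑ n ∈ range N, a n) atTop (𝓝 l) := by
  obtain ⟨s, hs⟩ := cauchySeq_tendsto_of_complete ha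
  have habel : Tendsto (fun t : ℝ ↦ ∑' n, a n * (t : ℂ) ^ n) (𝓝[<] 1) (𝓝 s) :=
    tendsto_map'_iff.mp (Complex.tendsto_tsum_powerSeries_nhdsWithin_lt hs)
  have hsl : s = l :=
    tendsto_nhds_unique habel (hl.congr' (hF.mono fun _ ht ↦ ht.tsum_eq.symm))
  exact hsl ▸ hs

end PowerSeries

section Logarithm

open Complex Finset Topology

variable {z : ℂ}

theorem one_sub_mem_slitPlane_of_norm_le_one (hz : ‖z‖ ≤ 1) (hz1 : z ≠ 1) :
    1 - z ∈ slitPlane := by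
  rw [mem_slitPlane_iff, sub_re, one_re, sub_pos, sub_im, one_im, zero_sub, neg_ne_zero]
  rcases ((re_le_norm z).trans hz).lt_or_eq with hre | hre
  · exact .inl hre
  · exact .inr fun him ↦ hz1 (Complex.ext hre him)

theorem cauchySeq_sum_range_pow_div (hz : ‖z‖ ≤ 1) (hz1 : z ≠ 1) :
    CauchySeq fun N ↦ ∑ n ∈ range N, z ^ n / n := by
  have hanti : Antitone fun n : ℕ ↦ 1 / ((n : ℝ) + 1) := fun _ _ h ↦ Nat.one_div_le_one_div h
  have hcauchy : CauchySeq fun N ↦ z * ∑ n ∈ range N, (1 / ((n : ℝ) + 1)) • z ^ n :=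
    (uniformContinuous_const_smul z).comp_cauchySeq <|
      cauchySeq_sum_smul_pow_of_antitone hanti tendsto_one_div_add_atTop_nhds_zero_nat hz hz1
  have hshift (N : ℕ) : z * ∑ n ∈ range N, (1 / ((n : ℝ) + 1)) • z ^ n =
      ∑ n ∈ range (N + 1), z ^ n / n := by
    rw [sum_range_succ', mul_sum]
    simp [pow_succ', div_eq_inv_mul, mul_left_comm]
  -- With `1 / 0 = 0`, the coefficients `1 / n` are antitone only from `n = 1` on.
  rw [← cauchySeq_shift 1]
  simpa only [hshift] using hcauchy

theorem tendsto_sum_range_pow_div (hz : ‖z‖ ≤ 1) (hz1 : z ≠ 1) :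
    Tendsto (fun N ↦ ∑ n ∈ range N, z ^ n / n) atTop (𝓝 (-log (1 - z))) := by
  refine tendsto_sum_range_of_tendsto_powerSeries (F := fun t ↦ -log (1 - z * t))
    (cauchySeq_sum_range_pow_div hz hz1) ?_ ?_
  · filter_upwards [Ioo_mem_nhdsLT (zero_lt_one' ℝ)] with t ⟨ht0, ht1⟩
    have hzt : ‖z * t‖ < 1 := by
      rw [norm_mul, norm_real, Real.norm_of_nonneg ht0.le]
      exact mul_lt_one_of_nonneg_of_lt_one_right hz ht0.le ht1
    simpa only [mul_pow, mul_div_right_comm] using hasSum_taylorSeries_neg_log hzt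
  · have hcont : ContinuousAt (fun t : ℝ ↦ -log (1 - z * t)) 1 :=
      (ContinuousAt.clog (by fun_prop)
        (by simpa using one_sub_mem_slitPlane_of_norm_le_one hz hz1)).neg
    simpa using hcont.tendsto.mono_left nhdsWithin_le_nhds

theorem tendsto_sum_range_re_pow_div (hz : ‖z‖ ≤ 1) (hz1 : z ≠ 1) :
    Tendsto (fun N ↦ ∑ n ∈ range N, (z ^ n).re / n) atTop (𝓝 (-Real.log ‖1 - z‖)) := by
  have hre := (continuous_re.tendsto _).comp (tendsto_sum_range_pow_div hz hz1)
  simpa only [Function.comp_def, re_sum, div_natCast_re, neg_re, log_re] using hre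

end Logarithm

section UnitCircle

open Complex Finset Topology

theorem cexp_ofReal_mul_I_eq_one_iff {x : ℝ} :
    cexp (x * I) = 1 ↔ ∃ n : ℤ, x = 2 * Real.pi * n := by
  rw [← Circle.coe_exp, Circle.coe_eq_one, Circle.exp_eq_one]
  simp only [mul_comm]

theorem sq_norm_one_sub_cexp_ofReal_mul_I (x : ℝ) :
    ‖1 - cexp (x * I)‖ ^ 2 = 2 - 2 * Real.cos x := by
  rw [norm_sub_rev, norm_sub_one_sq_eq_of_norm_eq_one (norm_exp_ofReal_mul_I x),
    exp_ofReal_mul_I_re, mul_sub, mul_one]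

theorem re_cexp_ofReal_mul_I_pow (x : ℝ) (n : ℕ) :
    (cexp (x * I) ^ n).re = Real.cos (n * x) := by
  rw [← exp_nat_mul, ← mul_assoc, ← ofReal_natCast, ← ofReal_mul, exp_ofReal_mul_I_re]

theorem tendsto_sum_range_cos_div {x : ℝ} (hx : cexp (x * I) ≠ 1) :
    Tendsto (fun N ↦ ∑ n ∈ range N, Real.cos (n * x) / n) atTop
      (𝓝 (-Real.log ‖1 - cexp (x * I)‖)) := by
  simpa only [re_cexp_ofReal_mul_I_pow] using
    tendsto_sum_range_re_pow_div (norm_exp_ofReal_mul_I x).le hx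

end UnitCircle

theorem sum_Icc_one_eq_sum_range_succ {M : Type*} [AddCommMonoid M] {f : ℕ → M} (hf : f 0 = 0)
    (N : ℕ) : ∑ k ∈ Finset.Icc 1 N, f k = ∑ k ∈ Finset.range (N + 1), f k := by
  rw [Finset.sum_range_eq_add_Ico f N.add_one_pos, hf, zero_add, Finset.Ico_add_one_right_eq_Icc]

/-- for real `x` not an integer multiple of `2π`, the series
`Σ_{k≥1} (e^{ikx} + e^{-ikx})/k = Σ_{k≥1} 2cos(kx)/k` converges (as a limit of
partial sums) and its sum equals `-log(2 - 2cos x)`. -/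
theorem stmt9 (x : ℝ) (hx : ∀ n : ℤ, x ≠ 2 * Real.pi * n) :
    Tendsto (fun N : ℕ => ∑ k ∈ Finset.Icc 1 N, 2 * Real.cos (k * x) / k)
      atTop (nhds (-Real.log (2 - 2 * Real.cos x))) := by
  have hexp : Complex.exp (x * Complex.I) ≠ 1 := fun h ↦
    let ⟨n, hn⟩ := cexp_ofReal_mul_I_eq_one_iff.mp h
    hx n hn
  have hlog : -Real.log (2 - 2 * Real.cos x) =
      2 * -Real.log ‖1 - Complex.exp (x * Complex.I)‖ := by
    rw [← sq_norm_one_sub_cexp_ofReal_mul_I, Real.log_pow, Nat.cast_ofNat, mul_neg]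
  have hsum (N : ℕ) : ∑ k ∈ Finset.Icc 1 N, 2 * Real.cos (k * x) / k =
      2 * ∑ k ∈ Finset.range (N + 1), Real.cos (k * x) / k := by
    rw [sum_Icc_one_eq_sum_range_succ (by simp), Finset.mul_sum]
    simp only [mul_div_assoc]
  simp only [hsum, hlog]
  exact ((tendsto_sum_range_cos_div hexp).comp (tendsto_add_atTop_nat 1)).const_mul 2
end

section
/- Let α = (√5 − 1)/2 be the golden mean and Sℓ(n) = Σ_{j=1}^{n} log(2 − 2cos(2πjα)). Then limsup_{n→∞} Sℓ(n)/log(n) = 2. -/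
open Filter

/-!
Up to the factor `2`, the Weyl sum is the logarithm of the Sudler product `∏ |2 sin (π r ψ)|`, where
`ψ` is the Galois conjugate of the golden ratio `φ`. Write `A k` for its value at length `F_k - 1`.
Comparing `ψ` with the fraction `(F_k - F_{k+1}) / F_k`, for which the product is exactly `F_k`,
gives the rough bound `A k = O(k)`.

Apart from its two nearly singular terms, the shifted sum of length `F_{k+1}` is a concave function
of the shift, and at the shifts `-ψ ^ 3, -ψ ^ 2, -ψ, 0` (in units of `ψ ^ k`) reflection expresses
it through `A`. Concavity then makes `A k - k log φ` satisfy the Fibonacci recurrence up to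
constants, from above and from below. With the rough bound this forces `A k - k log φ` to be
bounded, hence `A k = log F_k + O(1)`, and the constants are close enough for `A` to be eventually
monotone. Consequently all but finitely many blocks of the Zeckendorf decomposition contribute a
nonnegative amount to a shifted sum, and reflecting `n` to `F_{K+1} - 1 - n` shows that the sum of
length `n < F_{K+1}` exceeds `A (K + 1)` by at most a constant, while `A` itself shows that the
bound `log n + O(1)` is attained.
-/

namespace GoldenSudler

open Real Finset Topology
open scoped goldenRatio

lemma limsup_div_eq {ι : Type*} {l : Filter ι} {u v : ι → ℝ} {a C C' : ℝ}
    (hv : Tendsto v l atTop) (hle : ∀ᶠ n in l, u n ≤ a * v n + C)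
    (hge : ∃ᶠ n in l, a * v n - C' ≤ u n) :
    limsup (fun n => u n / v n) l = a := by
  have hup : ∀ ε > 0, ∀ᶠ n in l, u n / v n ≤ a + ε := by
    intro ε hε
    filter_upwards [hle, hv.eventually_gt_atTop 0, hv.eventually_ge_atTop (C / ε)] with n hn hpos hC
    rw [div_le_iff₀ hε] at hC
    rw [div_le_iff₀ hpos]
    linarith
  have hdown : ∀ ε > 0, ∃ᶠ n in l, a - ε ≤ u n / v n := by
    intro ε hε
    refine (hge.and_eventually
      ((hv.eventually_gt_atTop 0).and (hv.eventually_ge_atTop (C' / ε)))).mono ?_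
    rintro n ⟨hn, hpos, hC⟩
    rw [div_le_iff₀ hε] at hC
    rw [le_div_iff₀ hpos]
    linarith
  refine le_antisymm (le_of_forall_pos_le_add fun ε hε => ?_)
    (le_of_forall_pos_sub_le fun ε hε => ?_)
  · exact limsup_le_of_le (IsCoboundedUnder.of_frequently_ge (hdown 1 one_pos)) (hup ε hε)
  · exact le_limsup_of_frequently_le (hdown ε hε) ⟨_, hup 1 one_pos⟩

lemma concaveOn_log_comp {E : Type*} [AddCommMonoid E] [Module ℝ E] {s : Set E} {f : E → ℝ}
    (hf : ConcaveOn ℝ s f) (hpos : ∀ x ∈ s, 0 < f x) : ConcaveOn ℝ s fun x => log (f x) := by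
  refine ⟨hf.1, fun x hx y hy a b ha hb hab => ?_⟩
  have hmid : 0 < a • f x + b • f y :=
    convex_Ioi (0 : ℝ) (hpos x hx) (hpos y hy) ha hb hab
  exact (strictConcaveOn_log_Ioi.concaveOn.2 (hpos x hx) (hpos y hy) ha hb hab).trans
    (log_le_log hmid (hf.2 hx hy ha hb hab))

lemma concaveOn_sum {ι E : Type*} [AddCommMonoid E] [Module ℝ E] {s : Set E} (hs : Convex ℝ s)
    {t : Finset ι} {f : ι → E → ℝ} (hf : ∀ i ∈ t, ConcaveOn ℝ s (f i)) :
    ConcaveOn ℝ s fun x => ∑ i ∈ t, f i x := by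
  simp only [← Finset.sum_apply]
  exact sum_induction f (ConcaveOn ℝ s) (fun _ _ => ConcaveOn.add) (concaveOn_const 0 hs) hf

lemma exists_subset_Ioo_of_forall_intCast_notMem {s : Set ℝ} (hs : Convex ℝ s)
    (hint : ∀ m : ℤ, (m : ℝ) ∉ s) : ∃ m : ℤ, s ⊆ Set.Ioo (m : ℝ) (m + 1) := by
  rcases s.eq_empty_or_nonempty with rfl | ⟨x, hx⟩
  · exact ⟨0, Set.empty_subset _⟩
  refine ⟨⌊x⌋, fun y hy => ⟨?_, ?_⟩⟩
  · by_contra! hlt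
    exact hint ⌊x⌋ (hs.ordConnected.out hy hx ⟨hlt, Int.floor_le x⟩)
  · by_contra! hlt
    exact hint (⌊x⌋ + 1) (hs.ordConnected.out hx hy
      ⟨by exact_mod_cast (Int.lt_floor_add_one x).le, by exact_mod_cast hlt⟩)

/-! ### Chords of the unit circle -/

/-- The logarithm of the length of the chord from `1` to `exp (2πix)` of the unit circle.
At the integers, where the chord degenerates, it takes the junk value `log 0 = 0`. -/
noncomputable def logChord (x : ℝ) : ℝ := log |2 * sin (π * x)|

lemma logChord_neg (x : ℝ) : logChord (-x) = logChord x := by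
  simp [logChord, abs_mul]

lemma logChord_add_intCast (x : ℝ) (m : ℤ) : logChord (x + m) = logChord x := by
  rw [logChord, logChord, mul_add, mul_comm π m, sin_add_int_mul_pi, ← mul_assoc, mul_comm 2,
    mul_assoc, abs_mul, abs_zpow, abs_neg, abs_one, one_zpow, one_mul]

lemma log_two_sub_two_mul_cos (x : ℝ) : log (2 - 2 * cos (2 * π * x)) = 2 * logChord x := by
  have h : 2 - 2 * cos (2 * π * x) = (2 * sin (π * x)) ^ 2 := by
    rw [mul_assoc, cos_two_mul]
    linear_combination -4 * sin_sq_add_cos_sq (π * x)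
  rw [h, logChord, log_abs, log_pow, Nat.cast_ofNat]

lemma concaveOn_logChord_Ioo : ConcaveOn ℝ (Set.Ioo 0 1) logChord := by
  have hmem : ∀ x ∈ Set.Ioo (0 : ℝ) 1, π * x ∈ Set.Ioo 0 π := fun x hx =>
    ⟨mul_pos pi_pos hx.1, mul_lt_of_lt_one_right pi_pos hx.2⟩
  have hpos : ∀ x ∈ Set.Ioo (0 : ℝ) 1, 0 < 2 * sin (π * x) := fun x hx =>
    mul_pos two_pos (sin_pos_of_mem_Ioo (hmem x hx))
  have hsin : ConcaveOn ℝ (Set.Ioo 0 1) fun x => 2 * sin (π * x) :=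
    ((strictConcaveOn_sin_Icc.concaveOn.comp_linearMap (LinearMap.mulLeft ℝ π)).subset
      (fun x hx => Set.Ioo_subset_Icc_self (hmem x hx)) (convex_Ioo 0 1)).smul zero_le_two
  exact (concaveOn_log_comp hsin hpos).congr fun x hx => by
    rw [logChord, abs_of_pos (hpos x hx)]

lemma concaveOn_logChord {s : Set ℝ} (hs : Convex ℝ s) (hint : ∀ m : ℤ, (m : ℝ) ∉ s) :
    ConcaveOn ℝ s logChord := by
  obtain ⟨m, hm⟩ := exists_subset_Ioo_of_forall_intCast_notMem hs hint
  have htrans : ConcaveOn ℝ ((fun x => ((-m : ℤ) : ℝ) + x) ⁻¹' Set.Ioo 0 1)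
      fun x => logChord (((-m : ℤ) : ℝ) + x) := concaveOn_logChord_Ioo.translate_right _
  refine (htrans.subset (fun x hx => ?_) hs).congr fun x _ => ?_
  · rw [Set.mem_preimage, Int.cast_neg]
    exact ⟨by linarith [(hm hx).1], by linarith [(hm hx).2]⟩
  · beta_reduce
    rw [add_comm, logChord_add_intCast]

lemma concaveOn_sum_logChord {ι : Type*} {s : Set ℝ} (hs : Convex ℝ s) {t : Finset ι}
    {c : ι → ℝ} {d : ℝ} (hint : ∀ i ∈ t, ∀ w ∈ s, ∀ m : ℤ, c i + d * w ≠ m) :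
    ConcaveOn ℝ s fun w => ∑ i ∈ t, logChord (c i + d * w) := by
  refine concaveOn_sum hs fun i hi => ?_
  let f : ℝ →ᵃ[ℝ] ℝ := AffineMap.const ℝ ℝ (c i) + (LinearMap.mulLeft ℝ d).toAffineMap
  have hf : ConcaveOn ℝ (f '' s) logChord :=
    concaveOn_logChord (hs.affine_image f) (by rintro m ⟨w, hw, hwm⟩; exact hint i hi w hw m hwm)
  exact (hf.comp_affineMap f).subset (Set.subset_preimage_image f s) hs

lemma periodic_logChord : Function.Periodic logChord 1 := fun x => by
  simpa using logChord_add_intCast x 1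

lemma norm_coe_unitAddCircle_le (x : ℝ) (m : ℤ) : ‖(x : UnitAddCircle)‖ ≤ |x - m| := by
  rw [UnitAddCircle.norm_eq]
  exact round_le x m

lemma four_mul_norm_le_chord (x : ℝ) : 4 * ‖(x : UnitAddCircle)‖ ≤ |2 * sin (π * x)| := by
  have hround : |π * (x - round x)| ≤ π / 2 := by
    rw [abs_mul, abs_of_pos pi_pos]
    linarith [mul_le_mul_of_nonneg_left (abs_sub_round x) pi_pos.le]
  have hsin : |sin (π * (x - round x))| = |sin (π * x)| := by
    rw [mul_sub, mul_comm π (round x : ℝ), sin_sub_int_mul_pi, abs_mul, abs_zpow, abs_neg,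
      abs_one, one_zpow, one_mul]
  have hjordan := mul_abs_le_abs_sin hround
  rw [hsin, abs_mul, abs_of_pos pi_pos, ← mul_assoc, div_mul_cancel₀ _ pi_ne_zero,
    ← UnitAddCircle.norm_eq] at hjordan
  rw [abs_mul, abs_two]
  linarith

lemma abs_log_sub_log_le {a b c : ℝ} (hc : 0 < c) (ha : c ≤ a) (hb : c ≤ b) :
    |log a - log b| ≤ |a - b| / c := by
  wlog hab : b ≤ a generalizing a b
  · rw [abs_sub_comm, abs_sub_comm a]
    exact this hb ha (le_of_not_ge hab)
  have hb0 : 0 < b := hc.trans_le hb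
  have ha0 : 0 < a := hc.trans_le ha
  rw [abs_of_nonneg (sub_nonneg.mpr (log_le_log hb0 hab)), abs_of_nonneg (sub_nonneg.mpr hab),
    ← log_div ha0.ne' hb0.ne']
  calc log (a / b) ≤ a / b - 1 := log_le_sub_one_of_pos (by positivity)
    _ = (a - b) / b := by field_simp
    _ ≤ (a - b) / c := div_le_div_of_nonneg_left (sub_nonneg.mpr hab) hc hb

lemma abs_chord_sub_chord_le (x y : ℝ) :
    |(|2 * sin (π * x)| - |2 * sin (π * y)|)| ≤ 2 * (π * |x - y|) :=
  calc |(|2 * sin (π * x)| - |2 * sin (π * y)|)|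
      ≤ |2 * sin (π * x) - 2 * sin (π * y)| := abs_abs_sub_abs_le_abs_sub _ _
    _ = 2 * |sin (π * x) - sin (π * y)| := by rw [← mul_sub, abs_mul, abs_two]
    _ ≤ 2 * |π * x - π * y| :=
        mul_le_mul_of_nonneg_left (abs_sin_sub_sin_le _ _) zero_le_two
    _ = 2 * (π * |x - y|) := by rw [← mul_sub, abs_mul, abs_of_pos pi_pos]

lemma abs_logChord_sub_le {x y : ℝ} (hxy : |x - y| ≤ ‖(x : UnitAddCircle)‖ / 2) :
    |logChord x - logChord y| ≤ π * |x - y| / ‖(x : UnitAddCircle)‖ := by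
  set δ := ‖(x : UnitAddCircle)‖ with hδ
  rcases (norm_nonneg (x : UnitAddCircle)).eq_or_lt with h0 | hpos
  · have hzero : |x - y| = 0 :=
      le_antisymm (hxy.trans (by rw [hδ, ← h0, zero_div])) (abs_nonneg _)
    rw [sub_eq_zero.mp (abs_eq_zero.mp hzero)]
    simp
  have hy : δ / 2 ≤ ‖(y : UnitAddCircle)‖ := by
    have hdist : ‖((x - y : ℝ) : UnitAddCircle)‖ ≤ |x - y| := by
      simpa using norm_coe_unitAddCircle_le (x - y) 0
    have htri := norm_sub_norm_le (x : UnitAddCircle) y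
    rw [← AddCircle.coe_sub] at htri
    linarith
  calc |logChord x - logChord y| ≤ 2 * (π * |x - y|) / (2 * δ) :=
        (abs_log_sub_log_le (by positivity) (by linarith [four_mul_norm_le_chord x])
          (by linarith [four_mul_norm_le_chord y])).trans
          (div_le_div_of_nonneg_right (abs_chord_sub_chord_le x y) (by positivity))
    _ = π * |x - y| / δ := mul_div_mul_left _ _ two_ne_zero

lemma sum_Ico_mul_div_eq_of_isCoprime {M : Type*} [AddCommMonoid M] {f : ℝ → M}
    (hf : Function.Periodic f 1) {p : ℤ} {q : ℕ} (hpq : IsCoprime p q) :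
    ∑ r ∈ Ico 1 q, f (r * (p / q)) = ∑ s ∈ Ico 1 q, f (s / q) := by
  rcases q.eq_zero_or_pos with rfl | hq
  · simp
  have hmod : ∀ r : ℕ, (((r * p % q).toNat : ℕ) : ℤ) = r * p % q := fun r =>
    Int.toNat_of_nonneg (Int.emod_nonneg _ (by exact_mod_cast hq.ne'))
  have hmaps : ∀ r ∈ Ico 1 q, (r * p % q).toNat ∈ Ico 1 q := by
    intro r hr
    rw [mem_Ico] at hr ⊢
    have hlt : (r * p % q : ℤ) < q := Int.emod_lt_of_pos _ (by exact_mod_cast hq)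
    refine ⟨Nat.one_le_iff_ne_zero.mpr fun h => ?_, by have := hmod r; omega⟩
    have hdvd : (q : ℤ) ∣ r * p := Int.dvd_of_emod_eq_zero (by rw [← hmod r, h, Nat.cast_zero])
    exact absurd (Nat.le_of_dvd hr.1 (by exact_mod_cast hpq.symm.dvd_of_dvd_mul_right hdvd))
      (by omega)
  have hinj : Set.InjOn (fun r : ℕ => (r * p % q).toNat) (Ico 1 q) := by
    intro r hr s hs hrs
    have hmodEq : (r * p : ℤ) ≡ s * p [ZMOD q] := by
      rw [Int.ModEq, ← hmod r, ← hmod s]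
      exact_mod_cast hrs
    have hdvd := hmodEq.dvd
    rw [← sub_mul] at hdvd
    have hcancel : r ≡ s [MOD q] :=
      (Nat.modEq_iff_dvd).mpr (hpq.symm.dvd_of_dvd_mul_right hdvd)
    exact hcancel.eq_of_lt_of_lt (mem_Ico.mp hr).2 (mem_Ico.mp hs).2
  refine sum_nbij (fun r : ℕ => (r * p % q).toNat) hmaps hinj
    (surjOn_of_injOn_of_card_le _ hmaps hinj le_rfl) fun r _ => ?_
  have hq' : (q : ℝ) ≠ 0 := by exact_mod_cast hq.ne'
  have hdivmod : (r * p : ℝ) = ((r * p % q).toNat : ℕ) + q * ((r * p / q : ℤ) : ℝ) := by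
    have := Int.emod_add_mul_ediv (r * p) q
    rw [← hmod r] at this
    exact_mod_cast this.symm
  rw [← mul_div_assoc, hdivmod, add_div, mul_div_cancel_left₀ _ hq']
  simpa using hf.int_mul (r * p / q) _

lemma sum_Ico_logChord_div {q : ℕ} (hq : q ≠ 0) : ∑ s ∈ Ico 1 q, logChord (s / q) = log q := by
  obtain ⟨n, rfl⟩ := Nat.exists_eq_succ_of_ne_zero hq
  set ζ : ℂ := Complex.exp (2 * π * Complex.I / (n + 1 : ℕ)) with hζ
  have hprim : IsPrimitiveRoot ζ (n + 1) := Complex.isPrimitiveRoot_exp (n + 1) hq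
  have hchord : ∀ k : ℕ, ‖1 - ζ ^ (k + 1)‖ = |2 * sin (π * ((k + 1 : ℕ) / (n + 1 : ℕ)))| := by
    intro k
    have hexp : ζ ^ (k + 1) =
        Complex.exp (Complex.I * ((2 * (π * ((k + 1 : ℕ) / (n + 1 : ℕ))) : ℝ) : ℂ)) := by
      rw [hζ, ← Complex.exp_nat_mul]
      congr 1
      push_cast
      ring
    rw [norm_sub_rev, hexp, Complex.norm_exp_I_mul_ofReal_sub_one,
      mul_div_cancel_left₀ _ two_ne_zero, norm_eq_abs]
  have hne : ∀ k ∈ range n, ‖1 - ζ ^ (k + 1)‖ ≠ 0 := fun k hk =>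
    norm_ne_zero_iff.mpr (sub_ne_zero.mpr
      (hprim.pow_ne_one_of_pos_of_lt k.succ_ne_zero (by simpa using hk)).symm)
  calc ∑ s ∈ Ico 1 (n + 1), logChord (s / (n + 1 : ℕ))
      = ∑ k ∈ range n, log ‖1 - ζ ^ (k + 1)‖ := by
        simp only [sum_Ico_eq_sum_range, Nat.add_sub_cancel, add_comm 1, hchord, logChord]
    _ = log ‖∏ k ∈ range n, (1 - ζ ^ (k + 1))‖ := by rw [norm_prod, log_prod hne]
    _ = log (n + 1 : ℕ) := by
        rw [hprim.prod_one_sub_pow_eq_order, ← Nat.cast_add_one, Complex.norm_natCast]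

lemma sum_Ico_inv_le (q : ℕ) : ∑ s ∈ Ico 1 q, (s : ℝ)⁻¹ ≤ 1 + log q :=
  calc ∑ s ∈ Ico 1 q, (s : ℝ)⁻¹ ≤ ∑ s ∈ Icc 1 q, (s : ℝ)⁻¹ :=
        sum_le_sum_of_subset_of_nonneg Ico_subset_Icc_self fun _ _ _ => by positivity
    _ = (harmonic q : ℝ) := by rw [harmonic_eq_sum_Icc]; push_cast; rfl
    _ ≤ 1 + log q := harmonic_le_one_add_log q

lemma sum_Ico_inv_norm_div_le (q : ℕ) :
    ∑ s ∈ Ico 1 q, ‖((s / q : ℝ) : UnitAddCircle)‖⁻¹ ≤ 2 * q * (1 + log q) := by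
  have hterm : ∀ s ∈ Ico 1 q, ‖((s / q : ℝ) : UnitAddCircle)‖⁻¹ ≤
      q * ((s : ℝ)⁻¹ + ((q - s : ℕ) : ℝ)⁻¹) := by
    intro s hs
    rw [UnitAddCircle.norm_eq, abs_sub_round_div_natCast_eq, Nat.mod_eq_of_lt (mem_Ico.mp hs).2,
      inv_div, div_eq_mul_inv]
    gcongr
    rcases min_choice s (q - s) with h | h <;> rw [h]
    · exact le_add_of_nonneg_right (by positivity)
    · exact le_add_of_nonneg_left (by positivity)
  have hreflect : ∑ s ∈ Ico 1 q, ((q - s : ℕ) : ℝ)⁻¹ = ∑ s ∈ Ico 1 q, (s : ℝ)⁻¹ := by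
    rw [sum_Ico_reflect (fun s : ℕ => (s : ℝ)⁻¹) 1 q.le_succ, Nat.add_sub_cancel_left,
      Nat.add_sub_cancel]
  calc ∑ s ∈ Ico 1 q, ‖((s / q : ℝ) : UnitAddCircle)‖⁻¹
      ≤ ∑ s ∈ Ico 1 q, q * ((s : ℝ)⁻¹ + ((q - s : ℕ) : ℝ)⁻¹) := sum_le_sum hterm
    _ = 2 * q * ∑ s ∈ Ico 1 q, (s : ℝ)⁻¹ := by
        rw [← mul_sum, sum_add_distrib, hreflect]
        ring
    _ ≤ 2 * q * (1 + log q) := by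
        gcongr
        exact sum_Ico_inv_le q

lemma inv_le_norm_coe_div {a : ℤ} {q : ℕ} (h : ¬ (q : ℤ) ∣ a) :
    (q : ℝ)⁻¹ ≤ ‖((a / q : ℝ) : UnitAddCircle)‖ := by
  rcases q.eq_zero_or_pos with rfl | hq
  · simp
  have hq' : (0 : ℝ) < q := by exact_mod_cast hq
  set m := round ((a / q : ℝ))
  have hne : a - m * q ≠ 0 := fun h0 => h (Dvd.intro_left m (sub_eq_zero.mp h0).symm)
  have hone : (1 : ℝ) ≤ |(a : ℝ) - m * q| := by exact_mod_cast Int.one_le_abs hne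
  calc (q : ℝ)⁻¹ ≤ |(a : ℝ) - m * q| / q := by rw [inv_eq_one_div]; gcongr
    _ = ‖((a / q : ℝ) : UnitAddCircle)‖ := by
        rw [UnitAddCircle.norm_eq, ← abs_of_pos hq', ← abs_div, abs_of_pos hq', sub_div,
          mul_div_cancel_right₀ _ hq'.ne']

/-! ### Sudler sums -/

/-- The `n`-th Sudler sum of `α` shifted by `θ`: the logarithm of the Sudler product
`∏_{r=1}^n |2 sin (π (rα + θ))|`. The sums of the theorem are twice those with `θ = 0`. -/
noncomputable def sudlerSum (α : ℝ) (n : ℕ) (θ : ℝ) : ℝ :=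
  ∑ r ∈ Icc 1 n, logChord (r * α + θ)

section SudlerSum

variable (α : ℝ)

lemma sudlerSum_zero (θ : ℝ) : sudlerSum α 0 θ = 0 := by simp [sudlerSum]

lemma sudlerSum_succ (n : ℕ) (θ : ℝ) :
    sudlerSum α (n + 1) θ = sudlerSum α n θ + logChord ((n + 1 : ℕ) * α + θ) :=
  sum_Icc_succ_top (Nat.le_add_left 1 n) _

lemma sudlerSum_add (m n : ℕ) (θ : ℝ) :
    sudlerSum α (m + n) θ = sudlerSum α m θ + sudlerSum α n (m * α + θ) := by
  induction n with
  | zero => rw [sudlerSum_zero, add_zero, add_zero]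
  | succ n ih =>
    rw [← add_assoc, sudlerSum_succ, ih, sudlerSum_succ, ← add_assoc]
    congr 2
    push_cast
    ring

lemma sudlerSum_add_intCast (n : ℕ) (θ : ℝ) (m : ℤ) :
    sudlerSum α n (θ + m) = sudlerSum α n θ := by
  simp only [sudlerSum, ← add_assoc, logChord_add_intCast]

lemma sudlerSum_reflect (n : ℕ) (θ : ℝ) :
    sudlerSum α n (-((n + 1) * α) - θ) = sudlerSum α n θ := by
  have hmem : ∀ r ∈ Icc 1 n, n + 1 - r ∈ Icc 1 n := fun r hr => by
    rw [mem_Icc] at hr ⊢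
    omega
  have hinv : ∀ r ∈ Icc 1 n, n + 1 - (n + 1 - r) = r := fun r hr =>
    Nat.sub_sub_self ((mem_Icc.mp hr).2.trans n.le_succ)
  refine sum_nbij' (n + 1 - ·) (n + 1 - ·) hmem hmem hinv hinv fun r hr => ?_
  rw [← logChord_neg, Nat.cast_sub ((mem_Icc.mp hr).2.trans n.le_succ)]
  congr 1
  push_cast
  ring

lemma sudlerSum_neg_mul (l m : ℕ) :
    sudlerSum α m (-((l + m + 1 : ℕ) * α)) = sudlerSum α (l + m) 0 - sudlerSum α l 0 := by
  rw [sudlerSum_add, add_sub_cancel_left, ← sudlerSum_reflect]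
  congr 1
  push_cast
  ring

lemma abs_logChord_mul_div_sub_le {p : ℤ} {q r : ℕ} (hpq : IsCoprime p q)
    (happrox : q * |q * α - p| ≤ 1 / 2) (hr : 0 < r) (hrq : r < q) :
    |logChord (r * (p / q)) - logChord (r * α)| ≤
      π / (2 * q) * ‖((r * (p / q) : ℝ) : UnitAddCircle)‖⁻¹ := by
  have hq : (0 : ℝ) < q := by exact_mod_cast hr.trans hrq
  have hdist : |r * (p / q) - r * α| ≤ (q : ℝ)⁻¹ / 2 :=
    calc |r * (p / q) - r * α| = |r / q * (q * α - p)| := by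
          rw [abs_sub_comm]
          congr 1
          field_simp
      _ = r / q * |q * α - p| := by rw [abs_mul, abs_of_nonneg (by positivity : (0 : ℝ) ≤ r / q)]
      _ ≤ 1 * |q * α - p| := by
          gcongr
          rw [div_le_one hq]
          exact_mod_cast hrq.le
      _ ≤ (q : ℝ)⁻¹ / 2 := by
          rw [one_mul, ← one_div, div_right_comm, le_div_iff₀ hq]
          linarith
  have hnorm : (q : ℝ)⁻¹ ≤ ‖((r * (p / q) : ℝ) : UnitAddCircle)‖ := by
    have hndvd : ¬ (q : ℤ) ∣ r * p := fun h =>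
      Nat.not_dvd_of_pos_of_lt hr hrq (by exact_mod_cast hpq.symm.dvd_of_dvd_mul_right h)
    simpa [mul_div_assoc] using inv_le_norm_coe_div hndvd
  calc |logChord (r * (p / q)) - logChord (r * α)|
      ≤ π * |r * (p / q) - r * α| / ‖((r * (p / q) : ℝ) : UnitAddCircle)‖ :=
        abs_logChord_sub_le (by linarith)
    _ ≤ π * ((q : ℝ)⁻¹ / 2) / ‖((r * (p / q) : ℝ) : UnitAddCircle)‖ := by gcongr
    _ = π / (2 * q) * ‖((r * (p / q) : ℝ) : UnitAddCircle)‖⁻¹ := by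
        ring

lemma abs_sudlerSum_sub_log_le {p : ℤ} {q : ℕ} (hq : 0 < q) (hpq : IsCoprime p q)
    (happrox : q * |q * α - p| ≤ 1 / 2) :
    |sudlerSum α (q - 1) 0 - log q| ≤ π * (1 + log q) := by
  have hIco : Icc 1 (q - 1) = Ico 1 q :=
    Icc_sub_one_right_eq_Ico_of_not_isMin (not_isMin_of_lt hq) 1
  have hlog : ∑ r ∈ Ico 1 q, logChord (r * (p / q)) = log q := by
    rw [sum_Ico_mul_div_eq_of_isCoprime periodic_logChord hpq, sum_Ico_logChord_div hq.ne']
  have hinv : ∑ r ∈ Ico 1 q, ‖((r * (p / q) : ℝ) : UnitAddCircle)‖⁻¹ ≤ 2 * q * (1 + log q) := by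
    have hperiodic : Function.Periodic (fun x : ℝ => ‖(x : UnitAddCircle)‖⁻¹) 1 := fun x => by
      simp only [AddCircle.coe_add_period]
    rw [sum_Ico_mul_div_eq_of_isCoprime hperiodic hpq]
    exact sum_Ico_inv_norm_div_le q
  calc |sudlerSum α (q - 1) 0 - log q|
      = |∑ r ∈ Ico 1 q, (logChord (r * (p / q)) - logChord (r * α))| := by
        simp only [sum_sub_distrib, hlog, abs_sub_comm (log (q : ℝ)), sudlerSum, hIco, add_zero]
    _ ≤ ∑ r ∈ Ico 1 q, π / (2 * q) * ‖((r * (p / q) : ℝ) : UnitAddCircle)‖⁻¹ :=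
        (abs_sum_le_sum_abs _ _).trans (sum_le_sum fun r hr =>
          abs_logChord_mul_div_sub_le α hpq happrox (mem_Ico.mp hr).1 (mem_Ico.mp hr).2)
    _ ≤ π / (2 * q) * (2 * q * (1 + log q)) := by
        rw [← mul_sum]
        gcongr
    _ = π * (1 + log q) := by
        rw [← mul_assoc, div_mul_cancel₀ _ (by positivity)]

end SudlerSum

/-! ### The golden ratio and Fibonacci numbers -/

section Fibonacci

lemma three_halves_lt_goldenRatio : 3 / 2 < φ := by
  nlinarith [goldenRatio_sq, one_lt_goldenRatio]

lemma goldenRatio_lt_five_thirds : φ < 5 / 3 := by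
  nlinarith [goldenRatio_sq, one_lt_goldenRatio]

lemma abs_goldenConj : |ψ| = φ⁻¹ := by rw [inv_goldenRatio, abs_of_neg goldenConj_neg]

lemma log_goldenConj : log ψ = -log φ := by rw [← log_abs, abs_goldenConj, log_inv]

lemma two_mul_fib_le_goldenRatio_pow {k : ℕ} (hk : 2 ≤ k) : 2 * (Nat.fib k : ℝ) ≤ φ ^ k := by
  obtain ⟨n, rfl⟩ := Nat.exists_eq_add_of_le' hk
  have hfib : (Nat.fib (n + 2) : ℝ) = Nat.fib n + Nat.fib (n + 1) := by
    exact_mod_cast Nat.fib_add_two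
  have hmono : (Nat.fib n : ℝ) ≤ Nat.fib (n + 1) := by exact_mod_cast Nat.fib_le_fib_succ
  have hpow := goldenRatio_mul_fib_succ_add_fib (n + 1)
  nlinarith [three_halves_lt_goldenRatio]

lemma goldenRatio_pow_le_sq_mul_fib {k : ℕ} (hk : k ≠ 0) : φ ^ k ≤ φ ^ 2 * Nat.fib k := by
  obtain ⟨n, rfl⟩ := Nat.exists_eq_succ_of_ne_zero hk
  have hmono : (Nat.fib n : ℝ) ≤ Nat.fib (n + 1) := by exact_mod_cast Nat.fib_le_fib_succ
  rw [goldenRatio_sq, add_mul, one_mul, ← goldenRatio_mul_fib_succ_add_fib]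
  gcongr

lemma log_fib_le {k : ℕ} (hk : 2 ≤ k) : log (Nat.fib k) ≤ k * log φ := by
  have hpos : (0 : ℝ) < Nat.fib k := by exact_mod_cast Nat.fib_pos.mpr (by omega)
  rw [← log_pow]
  exact log_le_log hpos (by linarith [two_mul_fib_le_goldenRatio_pow hk])

lemma mul_log_goldenRatio_le {k : ℕ} (hk : k ≠ 0) :
    k * log φ ≤ log (Nat.fib k) + 2 * log φ := by
  have hpos : (0 : ℝ) < Nat.fib k := by exact_mod_cast Nat.fib_pos.mpr (Nat.pos_of_ne_zero hk)
  have hsq : 2 * log φ = log (φ ^ 2) := by rw [log_pow, Nat.cast_ofNat]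
  rw [hsq, ← log_pow, ← log_mul hpos.ne' (pow_ne_zero 2 goldenRatio_ne_zero), mul_comm (_ : ℝ)]
  exact log_le_log (pow_pos goldenRatio_pos k) (goldenRatio_pow_le_sq_mul_fib hk)

lemma fib_mul_goldenConj (k : ℕ) :
    Nat.fib k * ψ = ψ ^ k + ((Nat.fib k - Nat.fib (k + 1) : ℤ) : ℝ) := by
  push_cast
  linear_combination fib_succ_sub_goldenRatio_mul_fib k + Nat.fib k * goldenRatio_add_goldenConj

lemma exists_fib_coords (k : ℕ) (r p : ℤ) :
    ∃ u v : ℤ, r = u * Nat.fib (k + 1) + v * Nat.fib k ∧ r * ψ + p = ψ ^ k * (v + u * ψ) := by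
  induction k with
  | zero => exact ⟨r, p, by simp, by simp [add_comm]⟩
  | succ k ih =>
    obtain ⟨u, v, hr, hp⟩ := ih
    refine ⟨v, u - v, ?_, ?_⟩
    · rw [Nat.fib_add_two, hr]
      push_cast
      ring
    · rw [hp]
      push_cast
      linear_combination -v * ψ ^ k * goldenConj_sq

/- In the coordinates of `exists_fib_coords` the integer relation reads `w = -(v + uψ)`, so that
`|w| < φ` leaves only the basis vectors `(u, v) = (0, 1)` and `(1, 0)`. -/
lemma eq_fib_of_mul_goldenConj_add_eq_intCast {k r : ℕ} (hk : 0 < k) (hr : 0 < r)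
    (hr' : r ≤ Nat.fib (k + 1)) {w : ℝ} (hw : |w| < φ) {m : ℤ} (h : r * ψ + ψ ^ k * w = m) :
    (r = Nat.fib k ∧ w = -1) ∨ (r = Nat.fib (k + 1) ∧ w = -ψ) := by
  obtain ⟨u, v, hcoord, hval⟩ := exists_fib_coords k r (-m)
  have hw_eq : w = -(v + u * ψ) := by
    refine mul_left_cancel₀ (pow_ne_zero k goldenConj_ne_zero) ?_
    push_cast at hval
    linear_combination h - hval
  have hfib : (0 : ℤ) < Nat.fib k := by exact_mod_cast Nat.fib_pos.mpr hk
  have hfib' : (0 : ℤ) < Nat.fib (k + 1) := by exact_mod_cast Nat.fib_pos.mpr k.succ_pos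
  zify at hr hr'
  rw [hcoord] at hr hr'
  obtain ⟨hw₁, hw₂⟩ := abs_lt.mp hw
  have hψ := goldenConj_neg
  have hsum := goldenRatio_add_goldenConj
  rcases lt_trichotomy v 0 with hv | rfl | hv
  · have hu : 0 < u := by by_contra! hu; nlinarith
    have hu' : (1 : ℝ) ≤ u := by exact_mod_cast hu
    have hv' : (v : ℝ) ≤ -1 := by exact_mod_cast Int.le_sub_one_of_lt hv
    nlinarith
  · have hu : u = 1 := le_antisymm (by by_contra! hu; nlinarith) (by by_contra! hu; nlinarith)
    subst hu
    exact .inr ⟨by exact_mod_cast (by simpa using hcoord), by simpa using hw_eq⟩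
  · have hv' : (1 : ℝ) ≤ v := by exact_mod_cast hv
    rcases lt_trichotomy u 0 with hu | rfl | hu
    · have hu' : (u : ℝ) ≤ -1 := by exact_mod_cast Int.le_sub_one_of_lt hu
      nlinarith
    · have hv_lt : (v : ℝ) < 2 := by
        rw [Int.cast_zero, zero_mul] at hw_eq
        linarith [goldenRatio_lt_two]
      have hv_one : v = 1 := le_antisymm (Int.lt_add_one_iff.mp (by exact_mod_cast hv_lt)) hv
      subst hv_one
      exact .inl ⟨by exact_mod_cast (by simpa using hcoord), by simpa using hw_eq⟩
    · nlinarith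

lemma logChord_fib_mul_add (k : ℕ) (θ : ℝ) :
    logChord (Nat.fib k * ψ + θ) = logChord (ψ ^ k + θ) := by
  rw [fib_mul_goldenConj, add_right_comm, logChord_add_intCast]

lemma sudlerSum_fib_mul_add (n k : ℕ) (θ : ℝ) :
    sudlerSum ψ n (Nat.fib k * ψ + θ) = sudlerSum ψ n (ψ ^ k + θ) := by
  rw [fib_mul_goldenConj, add_right_comm, sudlerSum_add_intCast]

end Fibonacci

section AlmostFibonacci

variable {x : ℕ → ℝ} {a b : ℝ}

/- For solutions of the Fibonacci recurrence the shift multiplies `φ x (k + 1) + x k` by `φ`; a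
positive excess over the asserted bound would thus grow like `φ ^ k`. -/
lemma goldenRatio_mul_add_le_of_superadditive (ha : ∀ᶠ k in atTop, x (k + 1) + x k + a ≤ x (k + 2))
    (hx : Tendsto (fun k => x k / φ ^ k) atTop (𝓝 0)) :
    ∀ᶠ k in atTop, φ * x (k + 1) + x k ≤ -(φ ^ 2 * a) := by
  have hφ := goldenRatio_pos
  set u : ℕ → ℝ := fun k => φ * x (k + 1) + x k + φ ^ 2 * a with hu
  have hlim : Tendsto (fun k => u k / φ ^ k) atTop (𝓝 0) := by
    have hconst : Tendsto (fun k => φ ^ 2 * a / φ ^ k) atTop (𝓝 0) :=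
      tendsto_const_nhds.div_atTop (tendsto_pow_atTop_atTop_of_one_lt one_lt_goldenRatio)
    have hsum := ((((tendsto_add_atTop_iff_nat 1).mpr hx).const_mul (φ ^ 2)).add hx).add hconst
    simp only [mul_zero, add_zero] at hsum
    refine hsum.congr fun k => ?_
    simp only [hu]
    rw [add_div, add_div, ← mul_div_assoc, pow_succ' φ k, sq, mul_assoc φ φ,
      mul_div_mul_left _ _ goldenRatio_ne_zero]
  obtain ⟨N, hN⟩ := eventually_atTop.mp ha
  have hmono : MonotoneOn (fun k => u k / φ ^ k) {k | N ≤ k} := by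
    refine monotoneOn_nat_Ici_of_le_succ fun k hk => ?_
    rw [div_le_div_iff₀ (pow_pos hφ k) (pow_pos hφ (k + 1)), pow_succ, mul_comm _ φ, ← mul_assoc]
    have hstep : u k * φ ≤ u (k + 1) := by
      simp only [hu]
      linear_combination φ * hN k hk + (x (k + 1) + φ * a) * goldenRatio_sq
    gcongr
  filter_upwards [eventually_ge_atTop N] with k hk
  have hle : u k / φ ^ k ≤ 0 := ge_of_tendsto hlim <| by
    filter_upwards [eventually_ge_atTop k] with j hj
    exact hmono hk (hk.trans hj) hj
  rw [div_le_iff₀ (pow_pos hφ k), zero_mul] at hle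
  linarith

lemma le_goldenRatio_mul_add_of_subadditive (hb : ∀ᶠ k in atTop, x (k + 2) ≤ x (k + 1) + x k + b)
    (hx : Tendsto (fun k => x k / φ ^ k) atTop (𝓝 0)) :
    ∀ᶠ k in atTop, -(φ ^ 2 * b) ≤ φ * x (k + 1) + x k := by
  have hneg := goldenRatio_mul_add_le_of_superadditive (x := fun k => -x k) (a := -b)
    (hb.mono fun k hk => by linarith) (by simpa [neg_div] using hx.neg)
  exact hneg.mono fun k hk => by linarith

lemma exists_forall_abs_le_of_abs_goldenRatio_mul_add_le {M : ℝ}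
    (h : ∀ᶠ k in atTop, |φ * x (k + 1) + x k| ≤ M) : ∃ B, ∀ᶠ k in atTop, |x k| ≤ B := by
  have hφ := goldenRatio_pos
  obtain ⟨N, hN⟩ := eventually_atTop.mp h
  refine ⟨|x N| + φ * M, eventually_atTop.mpr ⟨N, fun k hk => ?_⟩⟩
  have hM : 0 ≤ M := (abs_nonneg _).trans (hN N le_rfl)
  induction k, hk using Nat.le_induction with
  | base => nlinarith
  | succ k hk ih =>
    refine le_of_mul_le_mul_left ?_ hφ
    calc φ * |x (k + 1)| = |φ * x (k + 1) + x k - x k| := by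
          rw [add_sub_cancel_right, abs_mul, abs_of_pos hφ]
      _ ≤ M + (|x N| + φ * M) := (abs_sub _ _).trans (add_le_add (hN k hk) ih)
      _ ≤ φ * (|x N| + φ * M) := by
          nlinarith [goldenRatio_sq, one_lt_goldenRatio, abs_nonneg (x N)]

lemma exists_forall_abs_le_of_almost_additive
    (ha : ∀ᶠ k in atTop, x (k + 1) + x k + a ≤ x (k + 2))
    (hb : ∀ᶠ k in atTop, x (k + 2) ≤ x (k + 1) + x k + b)
    (hx : Tendsto (fun k => x k / φ ^ k) atTop (𝓝 0)) : ∃ B, ∀ᶠ k in atTop, |x k| ≤ B := by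
  refine exists_forall_abs_le_of_abs_goldenRatio_mul_add_le (M := max (-(φ ^ 2 * a)) (φ ^ 2 * b)) ?_
  filter_upwards [goldenRatio_mul_add_le_of_superadditive ha hx,
    le_goldenRatio_mul_add_of_subadditive hb hx] with k hle hge
  exact abs_le.mpr ⟨by linarith [le_max_right (-(φ ^ 2 * a)) (φ ^ 2 * b)], le_max_of_le_left hle⟩

lemma eventually_neg_le_of_le_mul {r B ε : ℝ} {d : ℕ} (hr : 1 < r) (hε : 0 < ε)
    (hB : ∀ᶠ k in atTop, -B ≤ x k) (hx : ∀ᶠ k in atTop, x k ≤ r * x (k + d)) :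
    ∀ᶠ k in atTop, -ε ≤ x k := by
  have hr₀ : 0 < r := one_pos.trans hr
  have hdecay : ∀ j : ℕ, ∀ᶠ k in atTop, -(B / r ^ j) ≤ x k := by
    intro j
    induction j with
    | zero => simpa using hB
    | succ j ih =>
      rw [← map_add_atTop_eq_nat d, eventually_map]
      filter_upwards [ih, hx] with k hk hstep
      refine le_of_mul_le_mul_left (le_trans (le_of_eq ?_) (hk.trans hstep)) hr₀
      rw [pow_succ']
      field_simp
  have hlim : Tendsto (fun j : ℕ => B / r ^ j) atTop (𝓝 0) :=
    tendsto_const_nhds.div_atTop (tendsto_pow_atTop_atTop_of_one_lt hr)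
  obtain ⟨j, hj⟩ := (hlim.eventually_lt_const hε).exists
  exact (hdecay j).mono fun k hk => by linarith

lemma eventually_le_sub_of_almost_additive
    (ha : ∀ᶠ k in atTop, x (k + 1) + x k + a ≤ x (k + 2))
    (hb : ∀ᶠ k in atTop, x (k + 2) ≤ x (k + 1) + x k + b)
    (hx : Tendsto (fun k => x k / φ ^ k) atTop (𝓝 0)) {c : ℝ} (hc : c < φ * (a - b)) :
    ∀ᶠ k in atTop, c ≤ x (k + 1) - x k := by
  obtain ⟨B, hB⟩ := exists_forall_abs_le_of_almost_additive ha hb hx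
  set m := φ * (a - b) - a with hm
  have hcontract : ∀ᶠ k in atTop, x k - m ≤ φ ^ 2 * (x (k + 2) - m) := by
    have hsub := le_goldenRatio_mul_add_of_subadditive hb hx
    rw [← map_add_atTop_eq_nat 1, eventually_map] at hsub
    filter_upwards [ha, hsub] with k hk hk'
    have hfix : φ ^ 2 * m = m + a - φ ^ 2 * b := by
      simp only [hm]
      linear_combination φ * (a - b) * goldenRatio_sq
    linear_combination hk + hk' + hfix - x (k + 2) * goldenRatio_sq
  have hlower := eventually_neg_le_of_le_mul (x := fun k => x k - m) (d := 2) (B := B + m)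
    (one_lt_pow₀ one_lt_goldenRatio two_ne_zero) (sub_pos.mpr hc)
    (hB.mono fun k hk => by linarith [(abs_le.mp hk).1]) hcontract
  rw [← map_add_atTop_eq_nat 1, eventually_map]
  filter_upwards [ha, hlower] with k hk hk'
  linarith

end AlmostFibonacci

/-! ### Sums of Fibonacci length -/

/-- The Sudler sum of the golden mean of length one less than the `k`-th Fibonacci number. -/
noncomputable def fibSum (k : ℕ) : ℝ := sudlerSum ψ (Nat.fib k - 1) 0

lemma sudlerSum_neg_goldenConj_pow {k l m : ℕ} (h : l + m + 1 = Nat.fib k) :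
    sudlerSum ψ m (-ψ ^ k) = fibSum k - sudlerSum ψ l 0 := by
  have hshift : -ψ ^ k = -((l + m + 1 : ℕ) * ψ) + ((Nat.fib k - Nat.fib (k + 1) : ℤ) : ℝ) := by
    rw [h, fib_mul_goldenConj]
    ring
  rw [hshift, sudlerSum_add_intCast, sudlerSum_neg_mul, fibSum, ← h, Nat.add_sub_cancel]

lemma sudlerSum_fib_left {k : ℕ} (hk : 0 < k) :
    sudlerSum ψ (Nat.fib (k + 1)) (ψ ^ k * -ψ ^ 2) = fibSum (k + 2) - fibSum k := by
  have hpos : 0 < Nat.fib k := Nat.fib_pos.mpr hk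
  rw [show ψ ^ k * -ψ ^ 2 = -ψ ^ (k + 2) by ring, fibSum]
  refine sudlerSum_neg_goldenConj_pow ?_
  rw [Nat.fib_add_two]
  omega

lemma sudlerSum_fib_right (k : ℕ) :
    sudlerSum ψ (Nat.fib (k + 1)) (ψ ^ k * -ψ ^ 3) = fibSum (k + 3) - fibSum (k + 2) := by
  have hpos : 0 < Nat.fib (k + 2) := Nat.fib_pos.mpr (k + 1).succ_pos
  have hfib : Nat.fib (k + 3) = Nat.fib (k + 1) + Nat.fib (k + 2) := Nat.fib_add_two
  rw [show ψ ^ k * -ψ ^ 3 = -ψ ^ (k + 3) by ring]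
  exact sudlerSum_neg_goldenConj_pow (l := Nat.fib (k + 2) - 1) (by omega)

lemma min_le_sudlerSum_fib {k : ℕ} (hk : 0 < k) {w : ℝ} (hw : w ∈ Set.Icc (-ψ ^ 2) (-ψ ^ 3)) :
    min (fibSum (k + 2) - fibSum k) (fibSum (k + 3) - fibSum (k + 2)) ≤
      sudlerSum ψ (Nat.fib (k + 1)) (ψ ^ k * w) := by
  have hsq := goldenConj_sq
  have hcube : ψ ^ 3 = 2 * ψ + 1 := by linear_combination (ψ + 1) * goldenConj_sq
  have hψ := neg_one_lt_goldenConj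
  have hψ' := goldenConj_neg
  have hsum := goldenRatio_add_goldenConj
  have hconc : ConcaveOn ℝ (Set.Icc (-ψ ^ 2) (-ψ ^ 3))
      fun w => sudlerSum ψ (Nat.fib (k + 1)) (ψ ^ k * w) := by
    refine concaveOn_sum_logChord (convex_Icc _ _) fun r hr x hx m h => ?_
    rw [mem_Icc] at hr
    obtain ⟨hx₁, hx₂⟩ := hx
    have hx_abs : |x| < φ := abs_lt.mpr ⟨by linarith, by linarith⟩
    rcases eq_fib_of_mul_goldenConj_add_eq_intCast hk hr.1 hr.2 hx_abs h with
      ⟨-, rfl⟩ | ⟨-, rfl⟩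
    · linarith
    · linarith
  have hle : -ψ ^ 2 ≤ -ψ ^ 3 := hw.1.trans hw.2
  rw [← sudlerSum_fib_left hk, ← sudlerSum_fib_right]
  exact hconc.min_le_of_mem_Icc (Set.left_mem_Icc.mpr hle) (Set.right_mem_Icc.mpr hle) hw

/-- The Sudler sum of length `F_{k+1}` and shift `ψ ^ k * w`, without the two terms of index
`F_k` and `F_{k+1}`. These are the only ones that degenerate for some `|w| < φ`. -/
noncomputable def puncturedSum (k : ℕ) (w : ℝ) : ℝ :=
  ∑ r ∈ (Ico 1 (Nat.fib (k + 1))).erase (Nat.fib k), logChord (r * ψ + ψ ^ k * w)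

lemma concaveOn_puncturedSum {k : ℕ} (hk : 0 < k) :
    ConcaveOn ℝ (Set.Ioo (-φ) φ) (puncturedSum k) := by
  refine concaveOn_sum_logChord (convex_Ioo _ _) fun r hr w hw m h => ?_
  obtain ⟨hne, hmem⟩ := mem_erase.mp hr
  obtain ⟨hr₁, hr₂⟩ := mem_Ico.mp hmem
  rcases eq_fib_of_mul_goldenConj_add_eq_intCast hk hr₁ hr₂.le (abs_lt.mpr hw) h with h | h
  · exact hne h.1
  · exact hr₂.ne h.1

lemma sudlerSum_fib_eq (k : ℕ) (w : ℝ) :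
    sudlerSum ψ (Nat.fib (k + 1)) (ψ ^ k * w) =
      sudlerSum ψ (Nat.fib (k + 1) - 1) (ψ ^ k * w) + logChord (ψ ^ k * (w + ψ)) := by
  have hpos : 0 < Nat.fib (k + 1) := Nat.fib_pos.mpr k.succ_pos
  conv_lhs => rw [← Nat.sub_add_cancel hpos, sudlerSum_succ, Nat.sub_add_cancel hpos,
    logChord_fib_mul_add, pow_succ, ← mul_add, add_comm ψ]

lemma puncturedSum_eq {k : ℕ} (hk : 2 ≤ k) (w : ℝ) :
    puncturedSum k w =
      sudlerSum ψ (Nat.fib (k + 1) - 1) (ψ ^ k * w) - logChord (ψ ^ k * (w + 1)) := by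
  have hmem : Nat.fib k ∈ Ico 1 (Nat.fib (k + 1)) :=
    mem_Ico.mpr ⟨Nat.fib_pos.mpr (by omega), Nat.fib_lt_fib_succ hk⟩
  have hIco : Icc 1 (Nat.fib (k + 1) - 1) = Ico 1 (Nat.fib (k + 1)) :=
    Icc_sub_one_right_eq_Ico_of_not_isMin (not_isMin_of_lt (Nat.fib_pos.mpr k.succ_pos)) 1
  have hlog : logChord (Nat.fib k * ψ + ψ ^ k * w) = logChord (ψ ^ k * (w + 1)) := by
    rw [logChord_fib_mul_add, mul_add_one, add_comm]
  rw [puncturedSum, sudlerSum, hIco, ← add_sum_erase _ _ hmem, hlog, add_sub_cancel_left]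

lemma puncturedSum_zero {k : ℕ} (hk : 2 ≤ k) :
    puncturedSum k 0 = fibSum (k + 1) - logChord (ψ ^ k) := by
  rw [puncturedSum_eq hk, mul_zero, zero_add, mul_one, fibSum]

lemma puncturedSum_neg_goldenConj {k : ℕ} (hk : 2 ≤ k) :
    puncturedSum k (-ψ) = fibSum (k + 1) - logChord (ψ ^ k * φ) := by
  have hpos : 0 < Nat.fib (k + 1) := Nat.fib_pos.mpr k.succ_pos
  rw [puncturedSum_eq hk, neg_add_eq_sub, one_sub_goldenRatio, mul_neg, ← pow_succ,
    sudlerSum_neg_goldenConj_pow (l := 0) (by omega), sudlerSum_zero, sub_zero]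

lemma puncturedSum_neg_goldenConj_sq {k : ℕ} (hk : 2 ≤ k) :
    puncturedSum k (-ψ ^ 2) =
      fibSum (k + 2) - fibSum k - logChord (ψ ^ k * ψ) - logChord (ψ ^ k) := by
  have hblock := sudlerSum_fib_eq k (-ψ ^ 2)
  rw [sudlerSum_fib_left (by omega), show ψ ^ k * (-ψ ^ 2 + ψ) = -ψ ^ k by rw [goldenConj_sq]; ring,
    logChord_neg] at hblock
  rw [puncturedSum_eq hk, show ψ ^ k * (-ψ ^ 2 + 1) = -(ψ ^ k * ψ) by rw [goldenConj_sq]; ring,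
    logChord_neg]
  linarith

lemma puncturedSum_neg_goldenConj_cube {k : ℕ} (hk : 2 ≤ k) :
    puncturedSum k (-ψ ^ 3) =
      fibSum (k + 3) - fibSum (k + 2) - logChord (ψ ^ k * ψ ^ 2) - logChord (ψ ^ k * (2 * ψ)) := by
  have hcube : ψ ^ 3 = 2 * ψ + 1 := by linear_combination (ψ + 1) * goldenConj_sq
  have hblock := sudlerSum_fib_eq k (-ψ ^ 3)
  rw [sudlerSum_fib_right,
    show ψ ^ k * (-ψ ^ 3 + ψ) = -(ψ ^ k * ψ ^ 2) by rw [hcube, goldenConj_sq]; ring,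
    logChord_neg] at hblock
  rw [puncturedSum_eq hk,
    show ψ ^ k * (-ψ ^ 3 + 1) = -(ψ ^ k * (2 * ψ)) by rw [hcube]; ring, logChord_neg]
  linarith

/- Concavity at `-ψ ^ 3`, the point dividing `[0, -ψ]` with the weights `-ψ` and `ψ ^ 2`. -/
lemma le_fibSum_sub_fibSum {k : ℕ} (hk : 2 ≤ k) :
    fibSum (k + 1) + logChord (ψ ^ k * ψ ^ 2) + logChord (ψ ^ k * (2 * ψ)) -
        ψ ^ 2 * logChord (ψ ^ k * φ) + ψ * logChord (ψ ^ k) ≤ fibSum (k + 3) - fibSum (k + 2) := by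
  have hψ := goldenConj_neg
  have hsum := goldenRatio_add_goldenConj
  have hconc := (concaveOn_puncturedSum (k := k) (by omega)).2
    (⟨by linarith, by linarith⟩ : -ψ ∈ Set.Ioo (-φ) φ)
    (⟨by linarith, by linarith⟩ : (0 : ℝ) ∈ Set.Ioo (-φ) φ) (sq_nonneg ψ) (neg_nonneg.mpr hψ.le)
    (by linear_combination goldenConj_sq)
  rw [smul_eq_mul, smul_eq_mul, smul_eq_mul, smul_eq_mul,
    show ψ ^ 2 * -ψ + -ψ * 0 = -ψ ^ 3 by ring, puncturedSum_zero hk, puncturedSum_neg_goldenConj hk,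
    puncturedSum_neg_goldenConj_cube hk] at hconc
  linear_combination hconc - fibSum (k + 1) * goldenConj_sq

/- Concavity at `0`, the point dividing `[-ψ ^ 2, -ψ]` with the weights `-ψ` and `ψ ^ 2`. -/
lemma fibSum_add_two_le {k : ℕ} (hk : 2 ≤ k) :
    fibSum (k + 2) ≤ fibSum (k + 1) + fibSum k + logChord (ψ ^ k * ψ) + ψ * logChord (ψ ^ k) -
      ψ * logChord (ψ ^ k * φ) := by
  have hψ := goldenConj_neg
  have hψ' := neg_one_lt_goldenConj
  have hsum := goldenRatio_add_goldenConj
  have hsq := goldenConj_sq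
  have hconc := (concaveOn_puncturedSum (k := k) (by omega)).2
    (⟨by linarith, by linarith⟩ : -ψ ∈ Set.Ioo (-φ) φ)
    (⟨by linarith, by linarith⟩ : -ψ ^ 2 ∈ Set.Ioo (-φ) φ) (sq_nonneg ψ) (neg_nonneg.mpr hψ.le)
    (by linear_combination goldenConj_sq)
  rw [smul_eq_mul, smul_eq_mul, smul_eq_mul, smul_eq_mul,
    show ψ ^ 2 * -ψ + -ψ * -ψ ^ 2 = 0 by ring, puncturedSum_zero hk, puncturedSum_neg_goldenConj hk,
    puncturedSum_neg_goldenConj_sq hk] at hconc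
  refine le_of_mul_le_mul_left ?_ (neg_pos.mpr hψ)
  linear_combination hconc - (fibSum (k + 1) - logChord (ψ ^ k)) * goldenConj_sq

lemma tendsto_logChord_sub_log :
    Tendsto (fun y => logChord y - log y) (𝓝[≠] 0) (𝓝 (log (2 * π))) := by
  have hcont : ContinuousAt (fun y : ℝ => log (2 * π * sinc (π * y))) 0 := by
    refine ContinuousAt.log (by fun_prop) ?_
    simp [pi_ne_zero]
  have hlim : Tendsto (fun y : ℝ => log (2 * π * sinc (π * y))) (𝓝[≠] 0) (𝓝 (log (2 * π))) := by
    simpa using hcont.tendsto.mono_left nhdsWithin_le_nhds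
  refine hlim.congr' ?_
  have hsinc : ∀ᶠ y : ℝ in 𝓝[≠] 0, sinc (π * y) ≠ 0 :=
    nhdsWithin_le_nhds ((by fun_prop : ContinuousAt (fun y : ℝ => sinc (π * y)) 0).eventually_ne
      (by simp))
  filter_upwards [hsinc, self_mem_nhdsWithin] with y hsinc_y (hy : y ≠ 0)
  have hprod : 2 * sin (π * y) = 2 * π * sinc (π * y) * y := by
    rw [sinc_of_ne_zero (mul_ne_zero pi_ne_zero hy)]
    field_simp
  rw [logChord, log_abs, hprod, log_mul (by positivity) hy, add_sub_cancel_right]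

lemma tendsto_logChord_goldenConj_pow_mul {x : ℝ} (hx : x ≠ 0) :
    Tendsto (fun k : ℕ => logChord (ψ ^ k * x) + k * log φ) atTop (𝓝 (log (2 * π) + log x)) := by
  have hpow : Tendsto (fun k : ℕ => ψ ^ k * x) atTop (𝓝[≠] 0) := by
    refine tendsto_nhdsWithin_iff.mpr ⟨?_, .of_forall fun k =>
      mul_ne_zero (pow_ne_zero k goldenConj_ne_zero) hx⟩
    have hψ : |ψ| < 1 := by
      rw [abs_goldenConj]
      exact inv_lt_one_of_one_lt₀ one_lt_goldenRatio
    simpa using (tendsto_pow_atTop_nhds_zero_of_abs_lt_one hψ).mul_const x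
  refine ((tendsto_logChord_sub_log.comp hpow).add_const (log x)).congr fun k => ?_
  have hlog : log (ψ ^ k * x) = -(k * log φ) + log x := by
    rw [log_mul (pow_ne_zero k goldenConj_ne_zero) hx, log_pow, log_goldenConj, mul_neg]
  rw [Function.comp_apply, hlog]
  ring

lemma abs_fibSum_sub_log_le {k : ℕ} (hk : 2 ≤ k) :
    |fibSum k - log (Nat.fib k)| ≤ π * (1 + log (Nat.fib k)) := by
  refine abs_sudlerSum_sub_log_le ψ (p := Nat.fib k - Nat.fib (k + 1))
    (Nat.fib_pos.mpr (by omega)) ?_ ?_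
  · have hcop := Nat.isCoprime_iff_coprime.mpr (Nat.fib_coprime_fib_succ k)
    simpa [sub_eq_add_neg, add_comm] using hcop.symm.neg_left.add_mul_left_left 1
  · rw [fib_mul_goldenConj, add_sub_cancel_right, abs_pow, abs_goldenConj, inv_pow,
      ← div_eq_mul_inv, div_le_iff₀ (pow_pos goldenRatio_pos k)]
    linarith [two_mul_fib_le_goldenRatio_pow hk]

/-- The sum `fibSum k` with its main term `log F_k ∼ k log φ` removed. -/
noncomputable def normSum (k : ℕ) : ℝ := fibSum k - k * log φ

lemma abs_normSum_le {k : ℕ} (hk : 2 ≤ k) :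
    |normSum k| ≤ π * (1 + k * log φ) + 2 * log φ := by
  have hsum := abs_fibSum_sub_log_le hk
  have hle := log_fib_le hk
  have hge := mul_log_goldenRatio_le (by omega : k ≠ 0)
  have hlog : |log (Nat.fib k) - k * log φ| ≤ 2 * log φ :=
    abs_le.mpr ⟨by linarith, by linarith [log_pos one_lt_goldenRatio]⟩
  have hπ : π * (1 + log (Nat.fib k)) ≤ π * (1 + k * log φ) := by gcongr
  calc |normSum k| ≤ |fibSum k - log (Nat.fib k)| + |log (Nat.fib k) - k * log φ| :=
        abs_sub_le _ _ _
    _ ≤ π * (1 + k * log φ) + 2 * log φ := by linarith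

lemma tendsto_normSum_div_pow : Tendsto (fun k => normSum k / φ ^ k) atTop (𝓝 0) := by
  have hconst : Tendsto (fun k => (π + 2 * log φ) / φ ^ k) atTop (𝓝 0) :=
    tendsto_const_nhds.div_atTop (tendsto_pow_atTop_atTop_of_one_lt one_lt_goldenRatio)
  have hlinear : Tendsto (fun k : ℕ => (k : ℝ) / φ ^ k) atTop (𝓝 0) := by
    simpa using tendsto_pow_const_div_const_pow_of_one_lt 1 one_lt_goldenRatio
  have hbound := hconst.add (hlinear.const_mul (π * log φ))
  rw [mul_zero, add_zero] at hbound
  refine squeeze_zero_norm' ?_ hbound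
  filter_upwards [eventually_ge_atTop 2] with k hk
  have hφ := pow_pos goldenRatio_pos k
  rw [norm_eq_abs, abs_div, abs_of_pos hφ, ← mul_div_assoc, ← add_div]
  gcongr
  linarith [abs_normSum_le hk]

/-- The limiting constant in the superadditive recurrence for `normSum`, obtained from
`le_fibSum_sub_fibSum` through `logChord (ψ ^ k * x) ≈ log (2π) + log x - k log φ`. -/
noncomputable def superConst : ℝ := log (2 * π) + log 2 - (3 + ψ ^ 2) * log φ

/-- The limiting constant in the subadditive recurrence for `normSum`, obtained in the same way
from `fibSum_add_two_le`. -/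
noncomputable def subConst : ℝ := log (2 * π) - (2 + ψ) * log φ

lemma eventually_normSum_superadditive {a : ℝ} (ha : a < superConst) :
    ∀ᶠ k in atTop, normSum (k + 1) + normSum k + a ≤ normSum (k + 2) := by
  have hψ := goldenConj_ne_zero
  have hlim := (((tendsto_logChord_goldenConj_pow_mul (pow_ne_zero 2 hψ)).add
    (tendsto_logChord_goldenConj_pow_mul (mul_ne_zero two_ne_zero hψ))).sub
    ((tendsto_logChord_goldenConj_pow_mul goldenRatio_ne_zero).const_mul (ψ ^ 2))).add
    ((tendsto_logChord_goldenConj_pow_mul one_ne_zero).const_mul ψ)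
  have hconst : log (2 * π) + log (ψ ^ 2) + (log (2 * π) + log (2 * ψ)) -
      ψ ^ 2 * (log (2 * π) + log φ) + ψ * (log (2 * π) + log 1) = superConst := by
    rw [log_pow, log_mul two_ne_zero hψ, log_goldenConj, log_one, superConst, Nat.cast_ofNat]
    linear_combination -log (2 * π) * goldenConj_sq
  rw [hconst] at hlim
  rw [← map_add_atTop_eq_nat 1, eventually_map]
  filter_upwards [hlim.eventually_const_lt ha, eventually_ge_atTop 2] with k hk hk₂
  have hrec := le_fibSum_sub_fibSum hk₂
  rw [mul_one] at hk
  simp only [normSum]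
  push_cast
  linear_combination hk + hrec - k * log φ * goldenConj_sq

lemma eventually_normSum_subadditive {b : ℝ} (hb : subConst < b) :
    ∀ᶠ k in atTop, normSum (k + 2) ≤ normSum (k + 1) + normSum k + b := by
  have hψ := goldenConj_ne_zero
  have hlim := ((tendsto_logChord_goldenConj_pow_mul hψ).add
    ((tendsto_logChord_goldenConj_pow_mul one_ne_zero).const_mul ψ)).sub
    ((tendsto_logChord_goldenConj_pow_mul goldenRatio_ne_zero).const_mul ψ)
  have hconst : log (2 * π) + log ψ + ψ * (log (2 * π) + log 1) -
      ψ * (log (2 * π) + log φ) = subConst + log φ := by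
    rw [log_goldenConj, log_one, subConst]
    ring
  rw [hconst] at hlim
  filter_upwards [hlim.eventually_lt_const (by gcongr : _ < b + log φ),
    eventually_ge_atTop 2] with k hk hk₂
  have hrec := fibSum_add_two_le hk₂
  rw [mul_one] at hk
  simp only [normSum]
  push_cast
  linarith

lemma exists_forall_abs_normSum_le : ∃ B, ∀ᶠ k in atTop, |normSum k| ≤ B :=
  exists_forall_abs_le_of_almost_additive
    (eventually_normSum_superadditive (sub_one_lt superConst))
    (eventually_normSum_subadditive (lt_add_one subConst)) tendsto_normSum_div_pow

lemma log_goldenRatio_lt : log φ < 5 / 7 * log 2 := by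
  have hpow : φ ^ 7 < 2 ^ 5 := by
    rw [show φ ^ 7 = 13 * φ + 8 by
      linear_combination (φ ^ 5 + φ ^ 4 + 2 * φ ^ 3 + 3 * φ ^ 2 + 5 * φ + 8) * goldenRatio_sq]
    linarith [goldenRatio_lt_five_thirds]
  have hlog := log_lt_log (pow_pos goldenRatio_pos 7) hpow
  rw [log_pow, log_pow] at hlog
  push_cast at hlog
  linarith

lemma neg_log_goldenRatio_lt : -log φ < φ * (superConst - subConst) := by
  have hgap : superConst - subConst = log 2 - 2 * log φ := by
    rw [superConst, subConst]
    linear_combination -log φ * goldenConj_sq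
  rw [hgap]
  have hlog := log_goldenRatio_lt
  have hlog₂ := log_pos one_lt_two
  nlinarith [goldenRatio_lt_five_thirds, one_lt_goldenRatio]

lemma eventually_fibSum_le_succ : ∀ᶠ k in atTop, fibSum k ≤ fibSum (k + 1) := by
  set δ := φ * (superConst - subConst) + log φ
  have hδ_pos : 0 < δ := by linarith [neg_log_goldenRatio_lt]
  have hgap : -log φ < φ * (superConst - δ / 4 - (subConst + δ / 4)) := by
    nlinarith [goldenRatio_lt_two]
  filter_upwards [eventually_le_sub_of_almost_additive
    (eventually_normSum_superadditive (by linarith : superConst - δ / 4 < superConst))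
    (eventually_normSum_subadditive (by linarith : subConst < subConst + δ / 4))
    tendsto_normSum_div_pow hgap] with k hk
  simp only [normSum] at hk
  push_cast at hk
  linarith

/-! ### Sums of arbitrary length -/

/-- The amount by which the lower bound of `min_le_sudlerSum_fib` for the shifted sums of length
`F_{i+1}` falls below zero. -/
noncomputable def defect (i : ℕ) : ℝ :=
  (min (fibSum (i + 2) - fibSum i) (fibSum (i + 3) - fibSum (i + 2)))⁻

lemma neg_defect_le_sudlerSum_fib {k : ℕ} (hk : 0 < k) {w : ℝ}
    (hw : w ∈ Set.Icc (-ψ ^ 2) (-ψ ^ 3)) :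
    -defect k ≤ sudlerSum ψ (Nat.fib (k + 1)) (ψ ^ k * w) :=
  (neg_le.mp (neg_le_negPart _)).trans (min_le_sudlerSum_fib hk hw)

lemma exists_sum_defect_le : ∃ C, ∀ K, ∑ i ∈ range K, defect i ≤ C := by
  obtain ⟨N, hN⟩ := eventually_atTop.mp eventually_fibSum_le_succ
  have hzero : ∀ i ∉ range N, defect i = 0 := by
    intro i hi
    rw [mem_range, not_lt] at hi
    refine negPart_eq_zero.mpr (le_min (sub_nonneg.mpr ?_) (sub_nonneg.mpr ?_))
    · exact (hN i hi).trans (hN (i + 1) (by omega))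
    · exact hN (i + 2) (by omega)
  have hsummable : Summable defect := summable_of_ne_finset_zero hzero
  exact ⟨∑' i, defect i, fun K => hsummable.sum_le_tsum _ fun i _ => negPart_nonneg _⟩

lemma goldenConj_mul_mem_Icc {t : ℝ} (ht : t ∈ Set.Icc (-ψ ^ 2) (-ψ)) :
    ψ * t ∈ Set.Icc (-ψ ^ 2) (-ψ ^ 3) :=
  ⟨by nlinarith [ht.2, goldenConj_neg], by nlinarith [ht.1, goldenConj_neg]⟩

lemma goldenConj_sq_mul_add_one_mem_Icc {t : ℝ} (ht : t ∈ Set.Icc (-ψ ^ 2) (-ψ)) :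
    ψ ^ 2 * (t + 1) ∈ Set.Icc (-ψ ^ 2) (-ψ) := by
  have hψ := goldenConj_neg
  have hψ' := neg_one_lt_goldenConj
  have hsq := goldenConj_sq
  refine ⟨by nlinarith [ht.1], ?_⟩
  calc ψ ^ 2 * (t + 1) ≤ ψ ^ 2 * (-ψ + 1) := by gcongr; exact ht.2
    _ = -ψ := by linear_combination -ψ * goldenConj_sq

/- Zeckendorf decomposition of `m`: the leading block of length `F_{K+2}` is controlled by its
defect, and the remaining sum is of the same form with `K` in place of `K + 2`. -/
lemma neg_sum_defect_le_sudlerSum {K m : ℕ} (hm : m < Nat.fib (K + 1)) {t : ℝ}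
    (ht : t ∈ Set.Icc (-ψ ^ 2) (-ψ)) :
    -∑ i ∈ range K, defect i ≤ sudlerSum ψ m (ψ ^ K * t) := by
  have hdefect : ∀ i, 0 ≤ defect i := fun i => negPart_nonneg _
  induction K using Nat.twoStepInduction generalizing m t with
  | zero =>
    obtain rfl : m = 0 := by simpa using hm
    simp [sudlerSum_zero]
  | one =>
    obtain rfl : m = 0 := by simpa using hm
    simpa [sudlerSum_zero] using hdefect 0
  | more K ih₀ ih₁ =>
    have hw := goldenConj_mul_mem_Icc ht
    have hshift : ψ ^ (K + 2) * t = ψ ^ (K + 1) * (ψ * t) := by ring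
    rcases lt_or_ge m (Nat.fib (K + 2)) with hlt | hge
    · have hψ : -ψ ^ 3 ≤ -ψ := by
        nlinarith [goldenConj_sq, goldenConj_neg, neg_one_lt_goldenConj]
      have hsum := ih₁ hlt ⟨hw.1, hw.2.trans hψ⟩
      rw [hshift, sum_range_succ]
      linarith [hdefect (K + 1)]
    · obtain ⟨l, rfl⟩ := Nat.exists_eq_add_of_le hge
      have hl : l < Nat.fib (K + 1) := by
        have hfib : Nat.fib (K + 2 + 1) = Nat.fib (K + 1) + Nat.fib (K + 2) := Nat.fib_add_two
        omega
      have hrest := ih₀ hl (goldenConj_sq_mul_add_one_mem_Icc ht)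
      have hblock := neg_defect_le_sudlerSum_fib K.succ_pos hw
      rw [sudlerSum_add, sudlerSum_fib_mul_add,
        show ψ ^ (K + 2) + ψ ^ (K + 2) * t = ψ ^ K * (ψ ^ 2 * (t + 1)) by ring, hshift,
        sum_range_succ, sum_range_succ]
      linarith [hdefect K]

lemma sudlerSum_le_fibSum_add {K n : ℕ} (hn : n < Nat.fib (K + 1)) :
    sudlerSum ψ n 0 ≤ fibSum (K + 1) + ∑ i ∈ range K, defect i := by
  have hreflect := sudlerSum_neg_goldenConj_pow
    (show n + (Nat.fib (K + 1) - 1 - n) + 1 = Nat.fib (K + 1) by omega)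
  have hψ : -ψ ∈ Set.Icc (-ψ ^ 2) (-ψ) :=
    ⟨by nlinarith [goldenConj_neg, neg_one_lt_goldenConj], le_rfl⟩
  have hlower := neg_sum_defect_le_sudlerSum
    (show Nat.fib (K + 1) - 1 - n < Nat.fib (K + 1) by omega) hψ
  rw [mul_neg, ← pow_succ] at hlower
  linarith

lemma exists_sudlerSum_le : ∃ C, ∀ᶠ n : ℕ in atTop, sudlerSum ψ n 0 ≤ log n + C := by
  obtain ⟨B, hB⟩ := exists_forall_abs_normSum_le
  obtain ⟨N, hN⟩ := eventually_atTop.mp hB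
  obtain ⟨C, hC⟩ := exists_sum_defect_le
  refine ⟨B + C + 3 * log φ, eventually_atTop.mpr ⟨Nat.fib N + 1, fun n hn => ?_⟩⟩
  set K := Nat.greatestFib n
  have hNK : N ≤ K := Nat.le_greatestFib.mpr (by omega)
  have hK : 1 ≤ K := Nat.le_greatestFib.mpr (by rw [Nat.fib_one]; omega)
  have hpos : (0 : ℝ) < Nat.fib K := by exact_mod_cast Nat.fib_pos.mpr hK
  have hlog : log (Nat.fib K) ≤ log n :=
    log_le_log hpos (by exact_mod_cast Nat.fib_greatestFib_le n)
  have hnorm := (abs_le.mp (hN (K + 1) (by omega))).2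
  rw [normSum] at hnorm
  push_cast at hnorm
  linarith [sudlerSum_le_fibSum_add (Nat.lt_fib_greatestFib_add_one n), hC K,
    mul_log_goldenRatio_le (by omega : K ≠ 0)]

lemma exists_le_sudlerSum : ∃ C, ∃ᶠ n : ℕ in atTop, log n - C ≤ sudlerSum ψ n 0 := by
  obtain ⟨B, hB⟩ := exists_forall_abs_normSum_le
  have htend : Tendsto (fun k => Nat.fib k - 1) atTop atTop := by
    refine tendsto_atTop_mono (f := fun k => k - 2) (fun k => ?_) (tendsto_sub_atTop_nat 2)
    have hle := Nat.le_fib_add_one k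
    omega
  refine ⟨B, htend.frequently (Eventually.frequently ?_)⟩
  filter_upwards [hB, eventually_ge_atTop 3] with k hk hk₃
  have hfib : 2 ≤ Nat.fib k := Nat.fib_mono hk₃
  have hlog : log (Nat.fib k - 1 : ℕ) ≤ log (Nat.fib k) :=
    log_le_log (by exact_mod_cast (by omega : 0 < Nat.fib k - 1)) (by exact_mod_cast Nat.sub_le _ _)
  have hnorm := (abs_le.mp hk).1
  rw [normSum, fibSum] at hnorm
  linarith [log_fib_le (by omega : 2 ≤ k)]

end GoldenSudler

open GoldenSudler

/-- for the golden mean `α = (√5 - 1)/2` and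
`Sℓ(n) = Σ_{j=1}^n log(2 - 2cos(2πjα))`, one has `limsup_{n→∞} Sℓ(n)/log(n) = 2`. -/
theorem stmt11 (α : ℝ) (hα : α = (Real.sqrt 5 - 1) / 2)
    (Sl : ℕ → ℝ)
    (hSl : ∀ n : ℕ, Sl n = ∑ j ∈ Finset.Icc 1 n,
      Real.log (2 - 2 * Real.cos (2 * Real.pi * j * α))) :
    limsup (fun n : ℕ => Sl n / Real.log n) atTop = 2 := by
  have hψ : Real.goldenConj = -α := by
    rw [hα, Real.goldenConj]
    ring
  have hsum : ∀ n, Sl n = 2 * sudlerSum Real.goldenConj n 0 := by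
    intro n
    rw [hSl, sudlerSum, Finset.mul_sum]
    refine Finset.sum_congr rfl fun j _ => ?_
    rw [hψ, add_zero, mul_neg, logChord_neg, ← log_two_sub_two_mul_cos, mul_assoc (2 * Real.pi)]
  obtain ⟨C, hC⟩ := exists_sudlerSum_le
  obtain ⟨C', hC'⟩ := exists_le_sudlerSum
  refine limsup_div_eq (C := 2 * C) (C' := 2 * C')
    (Real.tendsto_log_atTop.comp tendsto_natCast_atTop_atTop)
    (hC.mono fun n hn => ?_) (hC'.mono fun n hn => ?_)
  · rw [hsum]
    linarith
  · rw [hsum]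
    linarith
end
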